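/- Let q be a prime power and write q^3 − 1 = k·P with gcd(k, P) = 1 and ω(P) = s ≥ 1, where the radical of P is p_1⋯p_s for distinct primes p_i. Set δ = 1 − 2·Σ_{i=1}^{s} 1/p_i, and let C_q = 2 if q is even and C_q = 3 if q is odd. If δ > 0 and q^{1/2} > C_q·2^{2ω(k)}·(2 + (2s − 1)/δ), then for every a in F_q there exists a primitive element ξ of F_{q^3} such that ξ + ξ^{-1} is also a primitive element of F_{q^3} and Tr(ξ) = a. -/

import Mathlib

/-!
Elements `ξ` of trace `a` with `ξ` and `ξ + ξ⁻¹` both primitive are detected by characters: `y` is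
primitive iff `χ_l y ≠ 1` for a character `χ_l` of each prime order `l ∣ |E| - 1`. A weighted sieve
treats the primes dividing `k` exactly and those dividing `P` through their density
`δ = 1 - 2 ∑ 1 / p`, and produces such a `ξ` as soon as the sums of `χ₁ ξ * χ₂ (ξ + ξ⁻¹)` over
`Tr ξ = a` are bounded by `C_q √|E|` for `(χ₁, χ₂) ≠ 1`. By orthogonality of additive characters
these reduce to the mixed sums `∑ χ₁ x * χ₂ (x ^ 2 + 1) * ψ x`.

For the latter, the `L`-function attached to the weight of monic polynomials defined by
`χ₁, χ₂, ψ` is a polynomial of degree at most `3` (at most `2` in characteristic two, where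
`x ^ 2 + 1 = (x + 1) ^ 2`), so the sum over the extension of degree `m` is minus the sum of the
`m`-th powers of at most `C_q` numbers. Those numbers have absolute value at most `√|E|` once
the sums over extensions of even degree are `O(|E| ^ (m / 2))`. This last estimate comes from
Stepanov's method: the Artin–Schreier substitution `x ↦ x ^ q - x + γ` replaces the additive
character by sums of a multiplicative character along a polynomial, and a polynomial vanishing to
high order at the points where that character takes a given value bounds their number.
-/

namespace CohenGupta

open Polynomial IntermediateField

/-! ### Nonvanishing of the auxiliary polynomial -/

section Nonvanishing

/-- The substitution `R[X][Y] → R[X]` sending the inner variable to `X ^ P` and the outer variable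
to `X`. The auxiliary polynomials of Stepanov's method are images of bivariate polynomials of
small degree under it. -/
noncomputable def substPow (R : Type*) [CommRing R] (P : ℕ) : R[X][X] →+* R[X] :=
  eval₂RingHom (expand R P : R[X] →+* R[X]) X

section CommRing

variable {R : Type*} [CommRing R]

lemma substPow_C (P : ℕ) (f : R[X]) : substPow R P (C f) = expand R P f := by
  simp [substPow]

lemma substPow_X (P : ℕ) : substPow R P X = X := by
  simp [substPow]

lemma substPow_map_C (P : ℕ) (f : R[X]) : substPow R P (f.map C) = f := by
  have hcomp : (expand R P : R[X] →+* R[X]).comp C = C := by ext; simp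
  rw [substPow, coe_eval₂RingHom, eval₂_map, hcomp, eval₂_C_X]

lemma substPow_eq_sum (P : ℕ) {A : R[X][X]} {n : ℕ} (hA : A.natDegree < n) :
    substPow R P A = ∑ i ∈ Finset.range n, expand R P (A.coeff i) * X ^ i := by
  rw [substPow, coe_eval₂RingHom, eval₂_eq_sum_range' _ hA]
  rfl

lemma coeff_substPow {P : ℕ} {A : R[X][X]} (hA : A.natDegree < P) (j : ℕ) {i : ℕ} (hi : i < P) :
    (substPow R P A).coeff (j * P + i) = (A.coeff i).coeff j := by
  have hP : 0 < P := by omega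
  rw [substPow_eq_sum P hA, finsetSum_coeff, Finset.sum_eq_single i]
  · simp [coeff_mul_X_pow', coeff_expand hP, Nat.mul_div_cancel _ hP]
  · intro b hb hbi
    have hndvd : b ≤ j * P + i → ¬ P ∣ j * P + i - b := fun hle hdvd => hbi <| by
      have hmod : b ≡ i [MOD P] := ((Nat.modEq_iff_dvd' hle).2 hdvd).trans (by simp [Nat.ModEq])
      exact hmod.eq_of_lt_of_lt (Finset.mem_range.1 hb) hi
    rw [coeff_mul_X_pow', coeff_expand hP]
    split_ifs with hle hdvd
    · exact absurd hdvd (hndvd hle)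
    all_goals rfl
  · exact fun h => absurd (Finset.mem_range.2 hi) h

lemma eq_zero_of_substPow_eq_zero {P : ℕ} {A : R[X][X]} (hA : A.natDegree < P)
    (h : substPow R P A = 0) : A = 0 := by
  ext i j
  by_cases hi : i < P
  · simpa [h] using (coeff_substPow hA j hi).symm
  · simp [coeff_eq_zero_of_natDegree_lt (show A.natDegree < i by omega)]

lemma natDegree_det_le {ι : Type*} [Fintype ι] [DecidableEq ι] (M : Matrix ι ι R[X]) {D : ℕ}
    (hM : ∀ i j, (M i j).natDegree ≤ D) : M.det.natDegree ≤ Fintype.card ι * D := by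
  rw [Matrix.det_apply]
  refine natDegree_sum_le_of_forall_le _ _ fun σ _ => (natDegree_smul_le _ _).trans ?_
  calc (∏ i, M (σ i) i).natDegree ≤ ∑ i, (M (σ i) i).natDegree := natDegree_prod_le _ _
    _ ≤ ∑ _i : ι, D := Finset.sum_le_sum fun i _ => hM _ _
    _ = Fintype.card ι * D := by simp

lemma natDegree_resultant_le (f g : R[X][X]) (m n : ℕ) {D : ℕ}
    (hf : ∀ i, (f.coeff i).natDegree ≤ D) (hg : ∀ i, (g.coeff i).natDegree ≤ D) :
    (f.resultant g m n).natDegree ≤ (m + n) * D := by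
  refine (natDegree_det_le (D := D) _ fun i j => ?_).trans_eq (by rw [Fintype.card_fin])
  rw [sylvester, Matrix.of_apply]
  refine Fin.addCases (fun j => ?_) (fun j => ?_) j
  · rw [Fin.addCases_left]
    split_ifs
    exacts [hg _, by simp]
  · rw [Fin.addCases_right]
    split_ifs
    exacts [hf _, by simp]

lemma exists_pow_eq_pow_natDegree_of_dvd_X_pow_sub_C {g : R[X]} (hg : g.Monic) {d : ℕ} {c : R}
    (hdvd : g ∣ X ^ d - C c) : ∃ x : R, x ^ d = c ^ g.natDegree := by
  refine ⟨Algebra.norm R (AdjoinRoot.root g), ?_⟩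
  have hroot : AdjoinRoot.root g ^ d = algebraMap R (AdjoinRoot g) c := by
    simpa [sub_eq_zero] using AdjoinRoot.mk_eq_zero.2 hdvd
  rw [← map_pow, hroot, Algebra.norm_algebraMap_of_basis (AdjoinRoot.powerBasis' hg).basis,
    Fintype.card_fin, AdjoinRoot.powerBasis'_dim]

end CommRing

lemma irreducible_X_pow_sub_C_of_forall_pow_ne {K : Type*} [Field K] {d : ℕ} (hd : 0 < d) {c : K}
    (hc : ∀ k, 0 < k → k < d → ∀ x : K, x ^ d ≠ c ^ k) : Irreducible (X ^ d - C c) := by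
  have hmonic : (X ^ d - C c).Monic := monic_X_pow_sub_C c hd.ne'
  have hne : (X ^ d - C c) ≠ 1 := fun h => by
    simpa [natDegree_X_pow_sub_C, hd.ne'] using congrArg natDegree h
  refine (hmonic.irreducible_iff_lt_natDegree_lt hne).2 fun g hg hdeg hdvd => ?_
  rw [natDegree_X_pow_sub_C, Finset.mem_Ioc] at hdeg
  obtain ⟨x, hx⟩ := exists_pow_eq_pow_natDegree_of_dvd_X_pow_sub_C hg hdvd
  exact hc _ hdeg.1 (by omega) x hx

lemma dvd_mul_multiplicity_of_pow_mul_pow_eq {R : Type*} [CommRing R] [IsDomain R]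
    [WfDvdMonoid R] {π a b u v : R} (hπ : Prime π) (ha : a ≠ 0) (hu : u ≠ 0) (hv : v ≠ 0)
    (hb : ¬ π ∣ b) {d k : ℕ} (h : u ^ d * a ^ k = v ^ d * b ^ k) : d ∣ k * multiplicity π a := by
  have hfin : ∀ {x : R}, x ≠ 0 → emultiplicity π x = multiplicity π x := fun hx =>
    (FiniteMultiplicity.of_prime_left hπ hx).emultiplicity_eq_multiplicity
  have hmul := congrArg (emultiplicity π) h
  simp only [emultiplicity_mul hπ, emultiplicity_pow hπ, hfin ha, hfin hu, hfin hv,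
    emultiplicity_eq_zero.2 hb, mul_zero, add_zero] at hmul
  exact (Nat.dvd_add_right ⟨_, rfl⟩).1 ⟨multiplicity π v, by exact_mod_cast hmul⟩

lemma pow_ne_div_pow_of_not_dvd_mul_multiplicity {R K : Type*} [CommRing R] [IsDomain R]
    [WfDvdMonoid R] [Field K] [Algebra R K] [IsFractionRing R K] {π a b : R} (hπ : Prime π)
    (ha : a ≠ 0) (hb : ¬ π ∣ b) {d k : ℕ} (hd : 0 < d) (hk : ¬ d ∣ k * multiplicity π a) (x : K) :
    x ^ d ≠ (algebraMap R K b / algebraMap R K a) ^ k := by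
  have hinj : Function.Injective (algebraMap R K) := IsFractionRing.injective R K
  have ha' : algebraMap R K a ≠ 0 := (map_ne_zero_iff _ hinj).2 ha
  have hb' : algebraMap R K b ≠ 0 := (map_ne_zero_iff _ hinj).2 fun h => hb (h ▸ dvd_zero π)
  intro h
  have hx : x ≠ 0 := by
    rintro rfl
    exact pow_ne_zero k (div_ne_zero hb' ha') (h.symm.trans (zero_pow hd.ne'))
  obtain ⟨u, v, hv, rfl⟩ := IsFractionRing.div_surjective (A := R) x
  have hv0 : v ≠ 0 := nonZeroDivisors.ne_zero hv
  have hv' : algebraMap R K v ≠ 0 := (map_ne_zero_iff _ hinj).2 hv0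
  have hu0 : u ≠ 0 := fun hu => hx (by rw [hu, map_zero, zero_div])
  rw [div_pow, div_pow, div_eq_div_iff (pow_ne_zero d hv') (pow_ne_zero k ha')] at h
  refine hk (dvd_mul_multiplicity_of_pow_mul_pow_eq hπ ha hu0 hv0 hb (hinj ?_))
  simpa only [map_mul, map_pow, mul_comm] using h

/-- The condition that makes `Y ^ d = h` an irreducible Kummer equation: for `0 < k < d` some prime
`π` witnesses, through its multiplicity in `h`, that `h ^ k` is not a `d`-th power. -/
def KummerNondegenerate {R : Type*} [CommRing R] (d : ℕ) (h : R) : Prop :=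
  ∀ k, 0 < k → k < d → ∃ π : R, Prime π ∧ ¬ d ∣ k * multiplicity π h

lemma map_resultant_eq_zero_of_eval₂_eq_zero {R S : Type*} [CommRing R] [CommRing S]
    (φ : R →+* S) (u : S) {f g : R[X]} (hg : g.natDegree ≠ 0) (hfu : eval₂ φ u f = 0)
    (hgu : eval₂ φ u g = 0) : φ (f.resultant g) = 0 := by
  obtain ⟨a, b, -, -, hab⟩ := exists_mul_add_mul_eq_C_resultant f g le_rfl le_rfl (Or.inr hg)
  simpa [eval₂_mul, hfu, hgu] using (congrArg (eval₂ φ u) hab).symm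

lemma resultant_ne_zero_of_irreducible_map {R K : Type*} [CommRing R] [Field K] [Algebra R K]
    [FaithfulSMul R K] {f g : R[X]} (hf : f ≠ 0)
    (hfg : f.natDegree < g.natDegree) (hg : Irreducible (g.map (algebraMap R K))) :
    f.resultant g ≠ 0 := by
  have hinj : Function.Injective (algebraMap R K) := FaithfulSMul.algebraMap_injective R K
  have hf' : f.map (algebraMap R K) ≠ 0 := (Polynomial.map_ne_zero_iff hinj).2 hf
  have hcop : IsCoprime (f.map (algebraMap R K)) (g.map (algebraMap R K)) := by
    refine (hg.coprime_iff_not_dvd.2 fun hdvd => ?_).symm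
    have hle := natDegree_le_of_dvd hdvd hf'
    rw [natDegree_map_eq_of_injective hinj, natDegree_map_eq_of_injective hinj] at hle
    omega
  intro hres
  refine (resultant_eq_zero_iff.1 ?_).2 hcop
  rw [natDegree_map_eq_of_injective hinj, natDegree_map_eq_of_injective hinj, resultant_map_map,
    hres, map_zero]

lemma irreducible_C_mul_X_pow_sub_C {R K : Type*} [CommRing R] [IsDomain R]
    [WfDvdMonoid R] [Field K] [Algebra R K] [IsFractionRing R K] {a b : R} {d : ℕ} (hd : 0 < d)
    (ha : a ≠ 0)
    (h : ∀ k, 0 < k → k < d → ∃ π : R, Prime π ∧ ¬ π ∣ b ∧ ¬ d ∣ k * multiplicity π a) :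
    Irreducible ((C a * X ^ d - C b).map (algebraMap R K)) := by
  have ha' : algebraMap R K a ≠ 0 := (map_ne_zero_iff _ (IsFractionRing.injective R K)).2 ha
  have hfactor : (C a * X ^ d - C b).map (algebraMap R K) =
      C (algebraMap R K a) * (X ^ d - C (algebraMap R K b / algebraMap R K a)) := by
    rw [mul_sub, ← C_mul, mul_div_cancel₀ _ ha']
    simp
  rw [hfactor, irreducible_isUnit_mul (isUnit_C.2 ha'.isUnit)]
  refine irreducible_X_pow_sub_C_of_forall_pow_ne hd fun k hk hkd => ?_
  obtain ⟨π, hπ, hπb, hdvd⟩ := h k hk hkd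
  exact pow_ne_div_pow_of_not_dvd_mul_multiplicity hπ ha hπb hd hdvd

section Bivariate

variable {E : Type*} [Field E]

lemma prime_map_C {π : E[X]} (hπ : Prime π) : Prime (π.map C : E[X][X]) := by
  rw [← Bivariate.swap_C]
  exact (MulEquiv.prime_iff (Bivariate.swap (R := E)).toMulEquiv).2 (prime_C_iff.2 hπ)

lemma map_C_dvd_map_C_iff {f g : E[X]} : (f.map C : E[X][X]) ∣ g.map C ↔ f ∣ g := by
  rw [← Bivariate.swap_C, ← Bivariate.swap_C, map_dvd_iff]
  exact ⟨fun h => by simpa using (C_dvd_iff_dvd_coeff _ _).1 h 0, map_dvd C⟩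

lemma multiplicity_map_C (f g : E[X]) :
    multiplicity (f.map C : E[X][X]) (g.map C) = multiplicity f g := by
  refine multiplicity_eq_of_emultiplicity_eq (emultiplicity_eq_emultiplicity_iff.2 fun n => ?_)
  rw [← Polynomial.map_pow, map_C_dvd_map_C_iff]

lemma not_map_C_dvd_C {π g : E[X]} (hπ : Prime π) (hg : g ≠ 0) :
    ¬ (π.map C : E[X][X]) ∣ C g := fun hdvd => by
  have hle := natDegree_le_of_dvd hdvd (C_ne_zero.2 hg)
  rw [natDegree_C, natDegree_map_eq_of_injective C_injective] at hle
  exact hle.not_gt hπ.irreducible.natDegree_pos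

/-- The resultant of `B` with the Kummer equation `h(X) Y ^ d = g(X ^ P)` is nonzero, and too small
in degree to be killed by `substPow`. -/
lemma eval₂_substPow_ne_zero {d P D : ℕ} {h g u : E[X]} (hnd : KummerNondegenerate d h)
    (hh : h ≠ 0) (hg : g ≠ 0) (hu : h * u ^ d = expand E P g) {B : E[X][X][X]} (hB : B ≠ 0)
    (hBd : B.natDegree < d) (hBD : ∀ i, (B.coeff i).natDegree ≤ D) (hhD : h.natDegree ≤ D)
    (hP : 2 * d * D < P) : eval₂ (substPow E P) u B ≠ 0 := by
  have hd : 0 < d := by omega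
  have hh' : (h.map C : E[X][X]) ≠ 0 := (Polynomial.map_ne_zero_iff C_injective).2 hh
  set Φ : E[X][X][X] := C (h.map C) * X ^ d - C (C g) with hΦ
  have hΦd : Φ.natDegree = d := by
    rw [hΦ, natDegree_sub_C, natDegree_C_mul_X_pow d _ hh']
  have hΦu : eval₂ (substPow E P) u Φ = 0 := by
    simp [hΦ, eval₂_mul, substPow_map_C, substPow_C, hu]
  have hΦD : ∀ i, (Φ.coeff i).natDegree ≤ D := fun i => by
    rw [hΦ, coeff_sub, coeff_C_mul_X_pow, coeff_C]
    refine (natDegree_sub_le _ _).trans (max_le ?_ ?_)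
    · split_ifs
      exacts [(natDegree_map_eq_of_injective C_injective h).trans_le hhD, by simp]
    · split_ifs <;> simp
  have hirr : Irreducible (Φ.map (algebraMap E[X][X] (FractionRing E[X][X]))) :=
    irreducible_C_mul_X_pow_sub_C hd hh' fun k hk hkd => by
      obtain ⟨π, hπ, hdvd⟩ := hnd k hk hkd
      exact ⟨π.map C, prime_map_C hπ, not_map_C_dvd_C hπ hg, by rwa [multiplicity_map_C]⟩
  have hres : B.resultant Φ ≠ 0 :=
    resultant_ne_zero_of_irreducible_map hB (by rwa [hΦd]) hirr
  intro hBu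
  refine hres (eq_zero_of_substPow_eq_zero ?_
    (map_resultant_eq_zero_of_eval₂_eq_zero (substPow E P) u (by omega) hBu hΦu))
  calc (B.resultant Φ).natDegree ≤ (B.natDegree + Φ.natDegree) * D :=
        natDegree_resultant_le _ _ _ _ hBD hΦD
    _ ≤ 2 * d * D := Nat.mul_le_mul_right _ (by omega)
    _ < P := hP

end Bivariate

end Nonvanishing

/-! ### Stepanov's method -/

section Stepanov

lemma exists_sum_smul_eq_zero_of_natDegree_lt {K ι : Type*} [Field K] [Fintype ι] (v : ι → K[X])
    {n : ℕ} (hv : ∀ i, (v i).natDegree < n) (hcard : n < Fintype.card ι) :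
    ∃ c : ι → K, c ≠ 0 ∧ ∑ i, c i • v i = 0 := by
  let w : ι → degreeLT K n := fun i =>
    ⟨v i, mem_degreeLT.2 ((degree_le_natDegree).trans_lt (by exact_mod_cast hv i))⟩
  have hdep : ¬ LinearIndependent K w := fun hw => by
    have hle := hw.fintype_card_le_finrank
    rw [(degreeLTEquiv K n).finrank_eq, Module.finrank_fin_fun] at hle
    omega
  obtain ⟨c, hc, hc0⟩ := Fintype.not_linearIndependent_iff.1 hdep
  exact ⟨c, Function.ne_iff.2 hc0, by simpa [w] using congrArg Subtype.val hc⟩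

/-- The trivariate polynomial with coefficients `c (k, i, j)` at `Z ^ k Y ^ i X ^ j`, where `Z` is
the outermost variable. -/
noncomputable def trivariate {R : Type*} [CommRing R] {d n J : ℕ}
    (c : Fin d × Fin n × Fin J → R) : R[X][X][X] :=
  ∑ t, monomial t.1 (monomial t.2.1 (monomial t.2.2 (c t)))

section Trivariate

variable {R : Type*} [CommRing R] {d n J : ℕ}

lemma coeff_trivariate (c : Fin d × Fin n × Fin J → R) (t : Fin d × Fin n × Fin J) :
    (((trivariate c).coeff t.1).coeff t.2.1).coeff t.2.2 = c t := by
  rw [trivariate, finsetSum_coeff, finsetSum_coeff, finsetSum_coeff, Finset.sum_eq_single t]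
  · simp
  · intro s _ hst
    have hne : ¬ ((s.1 : ℕ) = t.1 ∧ (s.2.1 : ℕ) = t.2.1 ∧ (s.2.2 : ℕ) = t.2.2) := fun h =>
      hst (Prod.ext (Fin.ext h.1) (Prod.ext (Fin.ext h.2.1) (Fin.ext h.2.2)))
    simp only [coeff_monomial]
    split_ifs with h₁
    · simp only [coeff_monomial]
      split_ifs with h₂
      · rw [coeff_monomial, if_neg fun h₃ => hne ⟨h₁, h₂, h₃⟩]
      · simp
    · simp
  · exact fun h => absurd (Finset.mem_univ t) h

lemma trivariate_ne_zero {c : Fin d × Fin n × Fin J → R} (hc : c ≠ 0) : trivariate c ≠ 0 := by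
  obtain ⟨t, ht⟩ := Function.ne_iff.1 hc
  exact fun h => ht (by simpa [h] using (coeff_trivariate c t).symm)

lemma natDegree_trivariate_lt {c : Fin d × Fin n × Fin J → R} (hc : c ≠ 0) :
    (trivariate c).natDegree < d := by
  obtain ⟨t, -⟩ := Function.ne_iff.1 hc
  refine (natDegree_sum_le_of_forall_le (n := d - 1) _ _ fun s _ => ?_).trans_lt
    (Nat.sub_one_lt_of_lt t.1.2)
  exact (natDegree_monomial_le _).trans (by omega)

lemma natDegree_coeff_trivariate_le (c : Fin d × Fin n × Fin J → R) (k : ℕ) :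
    ((trivariate c).coeff k).natDegree ≤ n - 1 := by
  rw [trivariate, finsetSum_coeff]
  refine natDegree_sum_le_of_forall_le _ _ fun s _ => ?_
  rw [coeff_monomial]
  split_ifs
  · exact (natDegree_monomial_le _).trans (by omega)
  · simp

lemma eval₂_substPow_trivariate (P : ℕ) (u : R[X]) (c : Fin d × Fin n × Fin J → R) :
    eval₂ (substPow R P) u (trivariate c) =
      ∑ t, C (c t) * X ^ (P * (t.2.2 : ℕ)) * X ^ (t.2.1 : ℕ) * u ^ (t.1 : ℕ) := by
  rw [trivariate, eval₂_finsetSum]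
  refine Finset.sum_congr rfl fun t _ => ?_
  rw [eval₂_monomial, ← C_mul_X_pow_eq_monomial, map_mul, map_pow, substPow_X, substPow_C,
    expand_monomial, ← C_mul_X_pow_eq_monomial, mul_comm P]

lemma natDegree_eval₂_substPow_trivariate_le (P : ℕ) (u : R[X]) (c : Fin d × Fin n × Fin J → R) :
    (eval₂ (substPow R P) u (trivariate c)).natDegree ≤ P * J + n + d * u.natDegree := by
  rw [eval₂_substPow_trivariate]
  refine natDegree_sum_le_of_forall_le _ _ fun t _ => ?_
  calc (C (c t) * X ^ (P * (t.2.2 : ℕ)) * X ^ (t.2.1 : ℕ) * u ^ (t.1 : ℕ)).natDegree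
      ≤ P * (t.2.2 : ℕ) + (t.2.1 : ℕ) + (t.1 : ℕ) * u.natDegree := by
        refine natDegree_mul_le_of_le (natDegree_mul_le_of_le ?_ (natDegree_X_pow_le _))
          natDegree_pow_le
        exact natDegree_C_mul_X_pow_le _ _
    _ ≤ P * J + n + d * u.natDegree := by
        gcongr <;> exact Fin.is_le'

end Trivariate

variable {E : Type*} [Field E]

/-- On points where `h ^ (e (P + 1)) = a`, the `P`-th power of `X ^ (P j) X ^ i (h ^ e) ^ k`, times
`h ^ (d e)`, agrees with this polynomial of much smaller degree; here `t = (k, i, j)`. -/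
noncomputable def reducedMonomial {n J : ℕ} (P d e : ℕ) (h : E[X]) (a : E)
    (t : Fin d × Fin n × Fin J) : E[X] :=
  C (a ^ (t.1 : ℕ)) * X ^ (P * (t.2.1 : ℕ)) * X ^ (t.2.2 : ℕ) * h ^ (e * (d - t.1))

lemma natDegree_reducedMonomial_lt {α J : ℕ} (P d e : ℕ) (h : E[X]) (a : E)
    (t : Fin d × Fin (α + 1) × Fin J) :
    (reducedMonomial P d e h a t).natDegree < P * α + d * e * h.natDegree + J := by
  have hdeg : (reducedMonomial P d e h a t).natDegree ≤
      P * (t.2.1 : ℕ) + (t.2.2 : ℕ) + e * (d - t.1) * h.natDegree :=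
    natDegree_mul_le_of_le
      (natDegree_mul_le_of_le (natDegree_C_mul_X_pow_le _ _) (natDegree_X_pow_le _))
      natDegree_pow_le
  have hi : P * (t.2.1 : ℕ) ≤ P * α := Nat.mul_le_mul_left _ (by omega)
  have hk : e * (d - t.1) * h.natDegree ≤ d * e * h.natDegree := by
    rw [mul_comm d e]
    gcongr
    omega
  omega

variable [Fintype E] {p μ P d e : ℕ} [Fact p.Prime] [CharP E p]

lemma eval_trivariate_pow_mul_pow {n J : ℕ} (hP : P = p ^ μ) (hcard : Fintype.card E = P ^ 2)
    (h : E[X]) (c : Fin d × Fin n × Fin J → E) {x a : E}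
    (hx : h.eval x ^ (e * (P + 1)) = a) :
    (eval₂ (substPow E P) (h ^ e) (trivariate fun t => c t ^ P)).eval x ^ P *
      h.eval x ^ (d * e) = (∑ t, c t • reducedMonomial P d e h a t).eval x := by
  have hfrob : ∀ z : E, (z ^ P) ^ P = z := fun z => by
    rw [← pow_mul, ← sq, ← hcard, FiniteField.pow_card]
  have hsum : ∀ f : Fin d × Fin n × Fin J → E, (∑ t, f t) ^ P = ∑ t, f t ^ P := fun f => by
    rw [hP, sum_pow_char_pow]
  simp only [eval₂_substPow_trivariate, eval_finsetSum, hsum, Finset.sum_mul]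
  refine Finset.sum_congr rfl fun t _ => ?_
  simp only [reducedMonomial, eval_smul, eval_mul, eval_pow, eval_C, eval_X, smul_eq_mul, mul_pow]
  have hexp : ((h.eval x ^ e) ^ (t.1 : ℕ)) ^ P * h.eval x ^ (d * e) =
      a ^ (t.1 : ℕ) * h.eval x ^ (e * (d - t.1)) := by
    have hsplit : d * e = e * (t.1 : ℕ) + e * (d - t.1) := by
      rw [← mul_add, Nat.add_sub_cancel' t.1.2.le, mul_comm]
    rw [← hx, hsplit, pow_add]
    ring
  have hX : (x ^ (P * (t.2.2 : ℕ))) ^ P = x ^ (t.2.2 : ℕ) := by rw [pow_mul, pow_right_comm, hfrob]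
  rw [hfrob, hX, mul_assoc (_ * _), hexp]
  ring

lemma exists_stepanov_polynomial (hP : P = p ^ μ) (hcard : Fintype.card E = P ^ 2)
    (hde : P = d * e + 1) (he : 0 < e) {h : E[X]} (hnd : KummerNondegenerate d h) (hh : h ≠ 0)
    {α J : ℕ} (hα : h.natDegree ≤ α) (hαP : 2 * d * α < P)
    (hJ : P * α + d * e * h.natDegree + J < d * J * (α + 1)) {a : E} (ha : a ≠ 0) :
    ∃ B : E[X], B ≠ 0 ∧ B.natDegree ≤ J * P + α + 1 + d * e * h.natDegree ∧
      ∀ x, h.eval x ^ (e * (P + 1)) = a → B.eval x = 0 := by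
  obtain ⟨c, hc0, hc⟩ := exists_sum_smul_eq_zero_of_natDegree_lt
    (reducedMonomial (n := α + 1) (J := J) P d e h a) (natDegree_reducedMonomial_lt P d e h a)
    (by simpa [mul_assoc, mul_comm, mul_left_comm] using hJ)
  have hc0' : (fun t => c t ^ P) ≠ 0 := by
    obtain ⟨t, ht⟩ := Function.ne_iff.1 hc0
    exact Function.ne_iff.2 ⟨t, pow_ne_zero P ht⟩
  have hexpand : h * (h ^ e) ^ d = expand E P (h.map (iterateFrobenius E p μ)) := by
    rw [← map_expand, hP, map_iterateFrobenius_expand, ← hP, hde]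
    ring
  refine ⟨eval₂ (substPow E P) (h ^ e) (trivariate fun t => c t ^ P), ?_, ?_, fun x hx => ?_⟩
  · exact eval₂_substPow_ne_zero hnd hh
      ((Polynomial.map_ne_zero_iff (iterateFrobenius E p μ).injective).2 hh) hexpand
      (trivariate_ne_zero hc0') (natDegree_trivariate_lt hc0')
      (natDegree_coeff_trivariate_le _) hα hαP
  · refine (natDegree_eval₂_substPow_trivariate_le P _ _).trans ?_
    have hle : d * (h ^ e).natDegree ≤ d * e * h.natDegree := by
      rw [mul_assoc]
      exact Nat.mul_le_mul_left _ natDegree_pow_le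
    rw [mul_comm P J]
    omega
  · have hy : h.eval x ≠ 0 := fun h0 => ha (by rw [← hx, h0, zero_pow (by positivity)])
    have hzero := eval_trivariate_pow_mul_pow (d := d) hP hcard h c hx
    rw [hc, eval_zero] at hzero
    exact eq_zero_of_pow_eq_zero
      ((mul_eq_zero.1 hzero).resolve_right (pow_ne_zero _ hy))

lemma exists_stepanov_parameter (hde : P = d * e + 1) (hd : 0 < d) {m : ℕ}
    (hbig : 2 * d * m + 2 * m + 4 < P) :
    ∃ α, m ≤ α ∧ α < P ∧ 2 * d * α < P ∧
      P * α + d * e * m + (e + 2 * m + 4) < d * (e + 2 * m + 4) * (α + 1) := by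
  have hle : 2 * d * ((P - 1) / (2 * d)) ≤ P - 1 := Nat.mul_div_le _ _
  have hlt : P ≤ 2 * d * ((P - 1) / (2 * d) + 1) := by
    have := Nat.lt_mul_div_succ (P - 1) (show 0 < 2 * d by omega)
    omega
  have hαP : (P - 1) / (2 * d) ≤ P - 1 := Nat.div_le_self _ _
  refine ⟨(P - 1) / (2 * d), ?_, by omega, by omega, ?_⟩
  · rw [Nat.le_div_iff_mul_le (by omega), mul_comm]
    omega
  · generalize (P - 1) / (2 * d) = α at hle hlt hαP ⊢
    have heP : e + 1 ≤ P := by nlinarith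
    have hm : (m + 2) * P ≤ (m + 2) * (2 * d * (α + 1)) := Nat.mul_le_mul_left _ hlt
    have hsplit : d * (e + 2 * m + 4) * (α + 1) =
        d * e * (α + 1) + (m + 2) * (2 * d * (α + 1)) := by ring
    have h₁ : d * e * (α + 1) + (α + 1) = P * α + P := by rw [hde]; ring
    have h₂ : d * e * m + m = P * m := by rw [hde]; ring
    have h₃ : (m + 2) * P = P * m + 2 * P := by ring
    omega

lemma pos_of_card_eq_sq (hcard : Fintype.card E = P ^ 2) (hde : P = d * e + 1) : 0 < e := by
  rcases e.eq_zero_or_pos with rfl | he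
  · have hone : Fintype.card E = 1 := by rw [hcard, hde, mul_zero, zero_add, one_pow]
    exact absurd hone (Fintype.one_lt_card (α := E)).ne'
  · exact he

lemma mul_card_eval_pow_eq_le [DecidableEq E] (hP : P = p ^ μ) (hcard : Fintype.card E = P ^ 2)
    (hde : P = d * e + 1) (hd : 0 < d) {h : E[X]} (hnd : KummerNondegenerate d h) (hh : h ≠ 0)
    {a : E} (ha : a ≠ 0) :
    d * (Finset.univ.filter fun x : E => h.eval x ^ (e * (P + 1)) = a).card ≤
      P ^ 2 + d * (2 * d * h.natDegree + 3 * h.natDegree + 5) * P := by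
  set m := h.natDegree with hm
  by_cases hbig : 2 * d * m + 2 * m + 4 < P
  · obtain ⟨α, hmα, hαP, hdα, hJ⟩ := exists_stepanov_parameter hde hd hbig
    obtain ⟨B, hB0, hBdeg, hBroot⟩ := exists_stepanov_polynomial hP hcard hde
      (pos_of_card_eq_sq hcard hde) hnd hh hmα hdα hJ ha
    rw [← hm] at hBdeg
    have hroots : (Finset.univ.filter fun x : E => h.eval x ^ (e * (P + 1)) = a).card ≤
        B.natDegree := card_le_degree_of_subset_roots fun x hx =>
      (mem_roots hB0).2 (hBroot x (by simpa using hx))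
    have hdeP : d * e * P ≤ P ^ 2 := by
      rw [sq]
      exact Nat.mul_le_mul_right _ (by omega)
    have hdem : d * e * m ≤ P * m := Nat.mul_le_mul_right _ (by omega)
    calc d * (Finset.univ.filter fun x : E => h.eval x ^ (e * (P + 1)) = a).card
        ≤ d * ((e + 2 * m + 4) * P + P + P * m) := Nat.mul_le_mul_left _ (by omega)
      _ = d * e * P + d * (3 * m + 5) * P := by ring
      _ ≤ P ^ 2 + d * (2 * d * m + 3 * m + 5) * P := by
        gcongr
        omega
  · calc d * (Finset.univ.filter fun x : E => h.eval x ^ (e * (P + 1)) = a).card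
        ≤ d * P ^ 2 := Nat.mul_le_mul_left _ (hcard ▸ Finset.card_le_univ _)
      _ = d * P * P := by ring
      _ ≤ d * (2 * d * m + 3 * m + 5) * P := by
        gcongr
        omega
      _ ≤ _ := Nat.le_add_left _ _

lemma norm_sum_mul_le_card_mul_sub {ι : Type*} (S : Finset ι) (N : ι → ℝ) (Θ : ι → ℂ) {W : ℝ}
    (hN : ∀ a ∈ S, N a ≤ W) (hΘ : ∀ a ∈ S, ‖Θ a‖ ≤ 1) (hsum : ∑ a ∈ S, Θ a = 0) :
    ‖∑ a ∈ S, (N a : ℂ) * Θ a‖ ≤ S.card * W - ∑ a ∈ S, N a := by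
  have hshift : ∑ a ∈ S, (N a : ℂ) * Θ a = ∑ a ∈ S, ((N a - W : ℝ) : ℂ) * Θ a := by
    simp only [Complex.ofReal_sub, sub_mul, Finset.sum_sub_distrib, ← Finset.mul_sum, hsum,
      mul_zero, sub_zero]
  calc ‖∑ a ∈ S, (N a : ℂ) * Θ a‖ ≤ ∑ a ∈ S, ‖((N a - W : ℝ) : ℂ) * Θ a‖ :=
        hshift ▸ norm_sum_le _ _
    _ ≤ ∑ a ∈ S, (W - N a) := Finset.sum_le_sum fun a ha => by
        rw [norm_mul, Complex.norm_real, Real.norm_of_nonpos (sub_nonpos.2 (hN a ha)), neg_sub]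
        exact mul_le_of_le_one_right (sub_nonneg.2 (hN a ha)) (hΘ a ha)
    _ = S.card * W - ∑ a ∈ S, N a := by
        rw [Finset.sum_sub_distrib, Finset.sum_const, nsmul_eq_mul]

lemma card_le_card_eval_ne_zero_add_natDegree [DecidableEq E] {h : E[X]} (hh : h ≠ 0) :
    Fintype.card E ≤ (Finset.univ.filter fun x : E => h.eval x ≠ 0).card + h.natDegree := by
  have hroots : (Finset.univ.filter fun x : E => ¬ h.eval x ≠ 0).card ≤ h.natDegree :=
    card_le_degree_of_subset_roots fun x hx => (mem_roots hh).2 (by simpa using hx)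
  have hsplit := Finset.card_filter_add_card_filter_not (s := (Finset.univ : Finset E))
    fun x : E => h.eval x ≠ 0
  rw [Finset.card_univ] at hsplit
  omega

lemma ne_zero_of_mem_nthRootsFinset_one {K : Type*} [Field K] (hd : 0 < d) {a : K}
    (ha : a ∈ nthRootsFinset d (1 : K)) : a ≠ 0 := fun h0 => by
  rw [mem_nthRootsFinset hd, h0, zero_pow hd.ne'] at ha
  exact zero_ne_one ha

lemma pow_mem_nthRootsFinset_one {r : ℕ} (hd : 0 < d) (hr : Fintype.card E - 1 = d * r)
    {y : E} (hy : y ≠ 0) : y ^ r ∈ nthRootsFinset d (1 : E) := by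
  rw [mem_nthRootsFinset hd, ← pow_mul, mul_comm r, ← hr,
    FiniteField.pow_card_sub_one_eq_one _ hy]

lemma card_eval_ne_zero_pow_eq [DecidableEq E] {r : ℕ} (hd : 0 < d) (hr0 : r ≠ 0) (h : E[X])
    {a : E} (ha : a ∈ nthRootsFinset d (1 : E)) :
    ((Finset.univ.filter fun x : E => h.eval x ≠ 0).filter fun x => h.eval x ^ r = a).card =
      (Finset.univ.filter fun x : E => h.eval x ^ r = a).card := by
  rw [Finset.filter_filter]
  congr 1
  refine Finset.filter_congr fun x _ => and_iff_right_of_imp fun hx h0 =>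
    ne_zero_of_mem_nthRootsFinset_one hd ha ?_
  rw [← hx, h0, zero_pow hr0]

lemma sum_eval_pow_eq_sum_card_mul [DecidableEq E] {r : ℕ} (hd : 0 < d) (hr0 : r ≠ 0)
    (hr : Fintype.card E - 1 = d * r) (h : E[X]) {Θ : E → ℂ} (hΘ0 : Θ 0 = 0) :
    ∑ x : E, Θ (h.eval x ^ r) = ∑ a ∈ nthRootsFinset d (1 : E),
      (((Finset.univ.filter fun x : E => h.eval x ^ r = a).card : ℝ) : ℂ) * Θ a := by
  have hsupp : ∑ x : E, Θ (h.eval x ^ r) =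
      ∑ x ∈ Finset.univ.filter (fun x : E => h.eval x ≠ 0), Θ (h.eval x ^ r) :=
    (Finset.sum_filter_of_ne (p := fun x => h.eval x ≠ 0) fun x _ hx h0 => hx
      (by rw [h0, zero_pow hr0, hΘ0])).symm
  rw [hsupp, ← Finset.sum_fiberwise_of_maps_to fun x hx =>
    pow_mem_nthRootsFinset_one hd hr (Finset.mem_filter.1 hx).2]
  refine Finset.sum_congr rfl fun a ha => ?_
  rw [Finset.sum_congr rfl fun x hx => by rw [(Finset.mem_filter.1 hx).2], Finset.sum_const,
    card_eval_ne_zero_pow_eq hd hr0 h ha, nsmul_eq_mul, Complex.ofReal_natCast]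

lemma card_le_sum_card_eval_pow_add_natDegree [DecidableEq E] {r : ℕ} (hd : 0 < d) (hr0 : r ≠ 0)
    (hr : Fintype.card E - 1 = d * r) {h : E[X]} (hh : h ≠ 0) :
    Fintype.card E ≤ ∑ a ∈ nthRootsFinset d (1 : E),
      (Finset.univ.filter fun x : E => h.eval x ^ r = a).card + h.natDegree := by
  rw [← Finset.sum_congr rfl fun a ha => card_eval_ne_zero_pow_eq hd hr0 h ha,
    ← Finset.card_eq_sum_card_fiberwise fun x hx =>
      pow_mem_nthRootsFinset_one hd hr (Finset.mem_filter.1 hx).2]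
  exact card_le_card_eval_ne_zero_add_natDegree hh

lemma sq_sub_one_eq_mul (hde : P = d * e + 1) : P ^ 2 - 1 = d * (e * (P + 1)) := by
  rw [hde, eq_comm, eq_tsub_iff_add_eq_of_le (Nat.one_le_pow _ _ (by omega))]
  ring

/-- The constant of the Stepanov bound for characters of order `d` along polynomials of degree
`m`. -/
def stepanovConstant (d m : ℕ) : ℕ :=
  d * (2 * d * m + 3 * m + 5) + m

lemma norm_sum_eval_pow_le (hP : P = p ^ μ) (hcard : Fintype.card E = P ^ 2)
    (hde : P = d * e + 1) (hd : 0 < d) {h : E[X]} (hnd : KummerNondegenerate d h) (hh : h ≠ 0)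
    {Θ : E → ℂ} (hΘ0 : Θ 0 = 0) (hΘ : ∀ a, ‖Θ a‖ ≤ 1)
    (hsum : ∑ a ∈ nthRootsFinset d (1 : E), Θ a = 0) :
    ‖∑ x : E, Θ (h.eval x ^ (e * (P + 1)))‖ ≤ stepanovConstant d h.natDegree * P := by
  classical
  set S := nthRootsFinset d (1 : E)
  set K := 2 * d * h.natDegree + 3 * h.natDegree + 5 with hK
  set N : E → ℕ := fun a => (Finset.univ.filter fun x => h.eval x ^ (e * (P + 1)) = a).card
  have hr0 : e * (P + 1) ≠ 0 := (Nat.mul_pos (pos_of_card_eq_sq hcard hde) P.succ_pos).ne'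
  have hr : Fintype.card E - 1 = d * (e * (P + 1)) := by rw [hcard, sq_sub_one_eq_mul hde]
  have hd' : (0 : ℝ) < d := by exact_mod_cast hd
  have hNle : ∀ a ∈ S, (N a : ℝ) ≤ (P : ℝ) ^ 2 / d + K * P := fun a ha => by
    have hle := mul_card_eval_pow_eq_le hP hcard hde hd hnd hh
      (ne_zero_of_mem_nthRootsFinset_one hd ha)
    rw [div_add' _ _ _ hd'.ne', le_div_iff₀' hd']
    refine le_trans (b := (P : ℝ) ^ 2 + d * K * P) (by exact_mod_cast hle) (by linarith)
  have hNsum : (P : ℝ) ^ 2 ≤ ∑ a ∈ S, (N a : ℝ) + h.natDegree := by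
    exact_mod_cast hcard ▸ card_le_sum_card_eval_pow_add_natDegree hd hr0 hr hh
  have hScard : (S.card : ℝ) ≤ d := by
    exact_mod_cast (Multiset.toFinset_card_le _).trans (card_nthRoots d (1 : E))
  have hPone : (1 : ℝ) ≤ P := by exact_mod_cast (show 1 ≤ P by omega)
  calc ‖∑ x : E, Θ (h.eval x ^ (e * (P + 1)))‖
      ≤ S.card * ((P : ℝ) ^ 2 / d + K * P) - ∑ a ∈ S, (N a : ℝ) :=
        sum_eval_pow_eq_sum_card_mul hd hr0 hr h hΘ0 ▸
          norm_sum_mul_le_card_mul_sub S _ Θ hNle (fun a _ => hΘ a) hsum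
    _ ≤ d * ((P : ℝ) ^ 2 / d + K * P) - (P ^ 2 - h.natDegree) := by
        gcongr
        exact sub_le_iff_le_add.2 hNsum
    _ = d * K * P + h.natDegree * 1 := by field_simp; ring
    _ ≤ d * K * P + h.natDegree * P := by gcongr
    _ = stepanovConstant d h.natDegree * P := by
        rw [stepanovConstant, ← hK]
        push_cast
        ring

end Stepanov

/-! ### Character sums along polynomials -/

section MulCharSum

lemma exists_pow_eq_of_pow_eq_one {G : Type*} [Group G] [Finite G] [IsCyclic G] {d r : ℕ}
    (hG : Nat.card G = d * r) {a : G} (ha : a ^ d = 1) : ∃ y : G, y ^ r = a := by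
  obtain ⟨g, hg⟩ := IsCyclic.exists_generator (α := G)
  obtain ⟨t, rfl⟩ := Subgroup.mem_zpowers_iff.1 (hg a)
  have hd : (d : ℤ) ≠ 0 := by
    exact_mod_cast left_ne_zero_of_mul (hG ▸ Nat.card_pos.ne' : d * r ≠ 0)
  rw [← zpow_natCast, ← zpow_mul, ← orderOf_dvd_iff_zpow_eq_one,
    orderOf_eq_card_of_forall_mem_zpowers hg, hG, mul_comm t, Nat.cast_mul] at ha
  obtain ⟨u, rfl⟩ := Int.dvd_of_mul_dvd_mul_left hd ha
  exact ⟨g ^ u, by rw [← zpow_natCast, ← zpow_mul, mul_comm]⟩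

lemma norm_mulChar_apply_le_one {M : Type*} [CommMonoid M] [Finite Mˣ] (χ : MulChar M ℂ) (a : M) :
    ‖χ a‖ ≤ 1 := by
  by_cases ha : IsUnit a
  · obtain ⟨u, rfl⟩ := ha
    have hpow : χ u ^ Nat.card Mˣ = 1 := by
      rw [← map_pow, ← Units.val_pow_eq_pow_val, pow_card_eq_one', Units.val_one, map_one]
    exact (Complex.norm_eq_one_of_pow_eq_one hpow Nat.card_pos.ne').le
  · rw [χ.map_nonunit ha, norm_zero]
    exact zero_le_one

variable {E : Type*} [Field E] [Fintype E] {d r : ℕ}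

lemma exists_pow_eq_of_pow_eq_one_of_card_sub_one (hr : Fintype.card E - 1 = d * r) {a : E}
    (ha0 : a ≠ 0) (ha : a ^ d = 1) : ∃ y : E, y ^ r = a := by
  classical
  have hunits : Nat.card Eˣ = d * r := by
    rw [Nat.card_eq_fintype_card, Fintype.card_units, hr]
  obtain ⟨y, hy⟩ := exists_pow_eq_of_pow_eq_one hunits (a := Units.mk0 a ha0)
    (Units.ext (by simpa using ha))
  exact ⟨y, by simpa using congrArg Units.val hy⟩

lemma mulChar_apply_eq_of_pow_eq (hr : Fintype.card E - 1 = d * r) (hr0 : r ≠ 0)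
    {η : MulChar E ℂ} (hη : η ^ d = 1) {y z : E} (hyz : y ^ r = z ^ r) : η y = η z := by
  rcases eq_or_ne z 0 with rfl | hz
  · rw [zero_pow hr0, pow_eq_zero_iff hr0] at hyz
    rw [hyz]
  · have hy : y ≠ 0 := by
      rintro rfl
      rw [zero_pow hr0] at hyz
      exact hz ((pow_eq_zero_iff hr0).1 hyz.symm)
    obtain ⟨w, hw⟩ := exists_pow_eq_of_pow_eq_one_of_card_sub_one (hr.trans (mul_comm d r))
      (div_ne_zero hy hz) (by rw [div_pow, hyz, div_self (pow_ne_zero _ hz)])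
    have hw0 : w ≠ 0 := by
      rintro rfl
      rcases eq_or_ne d 0 with rfl | hd
      · have := Fintype.one_lt_card (α := E)
        omega
      · rw [zero_pow hd] at hw
        exact div_ne_zero hy hz hw.symm
    have hηw : η w ^ d = 1 := by
      rw [← Units.val_mk0 hw0, ← MulChar.pow_apply_coe, hη, MulChar.one_apply_coe]
    rw [← div_mul_cancel₀ y hz, ← hw, map_mul, map_pow, hηw, one_mul]

lemma exists_apply_pow_eq_mulChar (hr : Fintype.card E - 1 = d * r) (hr0 : r ≠ 0)
    {η : MulChar E ℂ} (hη : η ^ d = 1) :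
    ∃ Θ : E → ℂ, (∀ y, Θ (y ^ r) = η y) ∧ ∀ a, ‖Θ a‖ ≤ 1 := by
  have hfactors : Function.FactorsThrough η (fun y : E => y ^ r) :=
    fun _ _ hyz => mulChar_apply_eq_of_pow_eq hr hr0 hη hyz
  refine ⟨Function.extend (fun y : E => y ^ r) η 0, hfactors.extend_apply 0, fun a => ?_⟩
  by_cases ha : ∃ y : E, y ^ r = a
  · obtain ⟨y, rfl⟩ := ha
    rw [hfactors.extend_apply 0 y]
    exact norm_mulChar_apply_le_one η y
  · rw [Function.extend_apply' _ _ _ ha, Pi.zero_apply, norm_zero]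
    exact zero_le_one

lemma sum_nthRootsFinset_eq_zero (hd : 0 < d) (hr : Fintype.card E - 1 = d * r)
    {η : MulChar E ℂ} (hη : η ≠ 1) {Θ : E → ℂ} (hΘ : ∀ y, Θ (y ^ r) = η y) :
    ∑ a ∈ nthRootsFinset d (1 : E), Θ a = 0 := by
  obtain ⟨b, hb⟩ := MulChar.ne_one_iff.1 hη
  have hbS := pow_mem_nthRootsFinset_one hd hr b.ne_zero
  have htranslate : ∑ a ∈ nthRootsFinset d (1 : E), Θ a =
      ∑ a ∈ nthRootsFinset d (1 : E), Θ ((b : E) ^ r * a) := by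
    refine (Finset.sum_bijective (fun a => (b : E) ^ r * a)
      (mulLeft_bijective₀ _ (pow_ne_zero _ b.ne_zero)) (fun a => ?_) fun _ _ => rfl).symm
    rw [mem_nthRootsFinset hd] at hbS
    rw [mem_nthRootsFinset hd, mem_nthRootsFinset hd, mul_pow, hbS, one_mul]
  have hscale : ∑ a ∈ nthRootsFinset d (1 : E), Θ ((b : E) ^ r * a) =
      η b * ∑ a ∈ nthRootsFinset d (1 : E), Θ a := by
    rw [Finset.mul_sum]
    refine Finset.sum_congr rfl fun a ha => ?_
    obtain ⟨y, rfl⟩ := exists_pow_eq_of_pow_eq_one_of_card_sub_one hr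
      (ne_zero_of_mem_nthRootsFinset_one hd ha) ((mem_nthRootsFinset hd 1).1 ha)
    rw [← mul_pow, hΘ, hΘ, map_mul]
  exact eq_zero_of_mul_eq_self_left hb (hscale.symm.trans htranslate.symm)

lemma norm_sum_mulChar_eval_le {p μ P : ℕ} [Fact p.Prime] [CharP E p] (hP : P = p ^ μ)
    (hcard : Fintype.card E = P ^ 2) {η : MulChar E ℂ} (hη : η ≠ 1) (hdvd : orderOf η ∣ P - 1)
    {h : E[X]} (hnd : KummerNondegenerate (orderOf η) h) (hh : h ≠ 0) :
    ‖∑ x : E, η (h.eval x)‖ ≤ stepanovConstant (orderOf η) h.natDegree * P := by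
  classical
  obtain ⟨e, he⟩ := hdvd
  have hde : P = orderOf η * e + 1 := by
    have : 0 < P := hP ▸ pow_pos (Fact.out : p.Prime).pos μ
    omega
  have hr : Fintype.card E - 1 = orderOf η * (e * (P + 1)) := by
    rw [hcard, sq_sub_one_eq_mul hde]
  have hr0 : e * (P + 1) ≠ 0 := (Nat.mul_pos (pos_of_card_eq_sq hcard hde) P.succ_pos).ne'
  obtain ⟨Θ, hΘ, hΘ1⟩ := exists_apply_pow_eq_mulChar hr hr0 (pow_orderOf_eq_one η)
  have hΘ0 : Θ 0 = 0 := by simpa [hr0, MulChar.map_zero] using hΘ 0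
  have hbound := norm_sum_eval_pow_le hP hcard hde η.orderOf_pos hnd hh hΘ0 hΘ1
    (sum_nthRootsFinset_eq_zero η.orderOf_pos hr hη hΘ)
  simpa only [hΘ] using hbound

end MulCharSum

/-! ### Mixed character sums over extension fields -/

section ArtinSchreier

variable (F L : Type*) [Field F] [Fintype F] [Field L] [Algebra F L]

/-- The Artin–Schreier map `z ↦ z ^ q - z` of an extension of a field with `q` elements. -/
noncomputable def artinSchreier : L →ₗ[F] L :=
  (FiniteField.frobeniusAlgHom F L).toLinearMap - LinearMap.id

variable {F L}

lemma artinSchreier_apply (z : L) : artinSchreier F L z = z ^ Fintype.card F - z := rfl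

lemma exists_algebraMap_eq_of_pow_card_eq {u : L} (hu : u ^ Fintype.card F = u) :
    ∃ c : F, algebraMap F L c = u := by
  have hsplits : (X ^ Fintype.card F - X : F[X]).Splits := by
    refine splits_iff_card_roots.2 ?_
    rw [FiniteField.roots_X_pow_card_sub_X, FiniteField.X_pow_card_sub_X_natDegree_eq F
      Fintype.one_lt_card, Finset.card_val, Finset.card_univ]
  have hne : (X ^ Fintype.card F - X : F[X]) ≠ 0 :=
    FiniteField.X_pow_card_sub_X_ne_zero F Fintype.one_lt_card
  exact hsplits.mem_range_of_isRoot hne (by simp [hu])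

lemma ker_artinSchreier : LinearMap.ker (artinSchreier F L) = F ∙ (1 : L) := by
  ext u
  rw [LinearMap.mem_ker, artinSchreier_apply, sub_eq_zero, Submodule.mem_span_singleton]
  constructor
  · intro hu
    obtain ⟨c, hc⟩ := exists_algebraMap_eq_of_pow_card_eq hu
    exact ⟨c, by rw [← hc, Algebra.algebraMap_eq_smul_one]⟩
  · rintro ⟨c, rfl⟩
    rw [← Algebra.algebraMap_eq_smul_one, ← map_pow, FiniteField.pow_card]

lemma range_artinSchreier [Finite L] :
    LinearMap.range (artinSchreier F L) = LinearMap.ker (Algebra.trace F L) := by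
  have hle : LinearMap.range (artinSchreier F L) ≤ LinearMap.ker (Algebra.trace F L) := by
    rintro _ ⟨z, rfl⟩
    rw [LinearMap.mem_ker, artinSchreier_apply, map_sub, sub_eq_zero]
    simpa using Algebra.trace_eq_of_algEquiv (FiniteField.frobeniusAlgEquivOfAlgebraic F L) z
  refine Submodule.eq_of_le_of_finrank_eq hle ?_
  have hartin := LinearMap.finrank_range_add_finrank_ker (artinSchreier F L)
  have htrace := LinearMap.finrank_range_add_finrank_ker (Algebra.trace F L)
  rw [ker_artinSchreier, finrank_span_singleton one_ne_zero] at hartin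
  rw [LinearMap.range_eq_top.2 (Algebra.trace_surjective F L), finrank_top,
    Module.finrank_self] at htrace
  omega

lemma trace_eq_trace_iff_exists_pow_card_sub_add [Finite L] {x γ : L} :
    Algebra.trace F L x = Algebra.trace F L γ ↔ ∃ z : L, z ^ Fintype.card F - z + γ = x := by
  rw [← sub_eq_zero, ← map_sub, ← LinearMap.mem_ker, ← range_artinSchreier, LinearMap.mem_range]
  simp only [artinSchreier_apply, eq_sub_iff_add_eq]

lemma card_artinSchreier_add_eq [Fintype L] [DecidableEq L] (z γ : L) :
    (Finset.univ.filter fun a : L =>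
      a ^ Fintype.card F - a + γ = z ^ Fintype.card F - z + γ).card = Fintype.card F := by
  have hfiber : (Finset.univ.filter fun a : L =>
      a ^ Fintype.card F - a + γ = z ^ Fintype.card F - z + γ) =
      Finset.univ.image fun c : F => z + algebraMap F L c := by
    ext a
    rw [Finset.mem_filter_univ, ← Finset.mem_coe, Finset.coe_image, Finset.coe_univ,
      Set.image_univ, add_left_inj,
      ← artinSchreier_apply (F := F), ← artinSchreier_apply (F := F), ← sub_eq_zero, ← map_sub,
      ← LinearMap.mem_ker, ker_artinSchreier, Submodule.mem_span_singleton, Set.mem_range]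
    simp only [Algebra.algebraMap_eq_smul_one, eq_sub_iff_add_eq, add_comm z]
  rw [hfiber, Finset.card_image_of_injective _
    fun _ _ hab => (algebraMap F L).injective (add_left_cancel hab), Finset.card_univ]

lemma sum_pow_card_sub_add [Fintype L] [DecidableEq F] (G : L → ℂ) (γ : L) :
    ∑ z : L, G (z ^ Fintype.card F - z + γ) =
      Fintype.card F * ∑ x with Algebra.trace F L x = Algebra.trace F L γ, G x := by
  classical
  have hmaps : ∀ z ∈ (Finset.univ : Finset L), z ^ Fintype.card F - z + γ ∈
      Finset.univ.filter fun x => Algebra.trace F L x = Algebra.trace F L γ := fun z _ =>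
    (Finset.mem_filter_univ _).2 (trace_eq_trace_iff_exists_pow_card_sub_add.2 ⟨z, rfl⟩)
  rw [Finset.mul_sum, ← Finset.sum_fiberwise_of_maps_to hmaps]
  refine Finset.sum_congr rfl fun x hx => ?_
  obtain ⟨z, rfl⟩ := trace_eq_trace_iff_exists_pow_card_sub_add.1 (Finset.mem_filter.1 hx).2
  rw [Finset.sum_congr rfl fun a ha => by rw [(Finset.mem_filter.1 ha).2], Finset.sum_const,
    card_artinSchreier_add_eq z γ, nsmul_eq_mul]

end ArtinSchreier

section Nondegeneracy

variable {K : Type*} [Field K]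

lemma exists_prime_multiplicity_pow_mul_eq {g v : K[X]} (hg : Squarefree g) (hunit : ¬ IsUnit g)
    (hcop : IsCoprime g v) (i : ℕ) : ∃ π : K[X], Prime π ∧ multiplicity π (g ^ i * v) = i := by
  obtain ⟨π, hπ, w, rfl⟩ := WfDvdMonoid.exists_irreducible_factor hunit hg.ne_zero
  refine ⟨π, hπ.prime, multiplicity_eq_of_dvd_of_not_dvd ?_ fun hdvd => ?_⟩
  · rw [mul_pow, mul_assoc]
    exact dvd_mul_right _ _
  · rw [mul_pow, mul_assoc, pow_succ, mul_dvd_mul_iff_left (pow_ne_zero i hπ.ne_zero)] at hdvd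
    rcases hπ.prime.dvd_or_dvd hdvd with hw | hv
    · exact hπ.not_isUnit (hg π (mul_dvd_mul_left π (hπ.prime.dvd_of_dvd_pow hw)))
    · exact hπ.not_isUnit (hcop.isUnit_of_dvd' (dvd_mul_right _ _) hv)

lemma natDegree_sq_add_one (u : K[X]) : (u ^ 2 + 1).natDegree = 2 * u.natDegree := by
  rw [← C_1, natDegree_add_C, natDegree_pow]

lemma not_isUnit_of_derivative_eq_neg_one {u : K[X]} (hu : derivative u = -1) : ¬ IsUnit u := by
  intro hunit
  obtain ⟨c, -, rfl⟩ := Polynomial.isUnit_iff.1 hunit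
  rw [derivative_C, zero_eq_neg] at hu
  exact one_ne_zero hu

lemma squarefree_of_derivative_eq_neg_one {u : K[X]} (hu : derivative u = -1) : Squarefree u :=
  Separable.squarefree ⟨0, -1, by rw [hu]; ring⟩

lemma squarefree_sq_add_one (h2 : (2 : K) ≠ 0) {u : K[X]} (hu : derivative u = -1) :
    Squarefree (u ^ 2 + 1) := by
  have hinv : C (2 : K) * C 2⁻¹ = 1 := by rw [← C_mul, mul_inv_cancel₀ h2, C_1]
  refine Separable.squarefree ⟨1, C 2⁻¹ * u, ?_⟩
  rw [derivative_add, derivative_one, derivative_sq, hu]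
  linear_combination (-u ^ 2) * hinv

lemma exists_prime_multiplicity_pow_mul_sq_add_one_pow {u : K[X]} (hu : derivative u = -1)
    (i j : ℕ) : ∃ π : K[X], Prime π ∧
      (multiplicity π (u ^ i * (u ^ 2 + 1) ^ j) = j ∨
        (2 : K) = 0 ∧ multiplicity π (u ^ i * (u ^ 2 + 1) ^ j) = j * 2) := by
  rw [mul_comm]
  by_cases h2 : (2 : K) = 0
  · have hsq : u ^ 2 + 1 = (u + 1) ^ 2 := by
      have h2' : (2 : K[X]) = 0 := by rw [← C_ofNat, h2, C_0]
      linear_combination (-u) * h2'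
    have hu' : derivative (u + 1) = -1 := by rw [derivative_add, derivative_one, hu, add_zero]
    have hcop : IsCoprime (u + 1) (u ^ i) := IsCoprime.pow_right ⟨1, -1, by ring⟩
    obtain ⟨π, hπ, hmult⟩ := exists_prime_multiplicity_pow_mul_eq
      (squarefree_of_derivative_eq_neg_one hu') (not_isUnit_of_derivative_eq_neg_one hu') hcop
      (2 * j)
    exact ⟨π, hπ, .inr ⟨h2, by rw [hsq, ← pow_mul, hmult, mul_comm]⟩⟩
  · have hcop : IsCoprime (u ^ 2 + 1) (u ^ i) := IsCoprime.pow_right ⟨1, -u, by ring⟩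
    suffices hunit : ¬ IsUnit (u ^ 2 + 1) by
      obtain ⟨π, hπ, hmult⟩ := exists_prime_multiplicity_pow_mul_eq
        (squarefree_sq_add_one h2 hu) hunit hcop j
      exact ⟨π, hπ, .inl hmult⟩
    intro hunit
    have hdeg := natDegree_eq_zero_of_isUnit hunit
    rw [natDegree_sq_add_one] at hdeg
    rw [eq_C_of_natDegree_eq_zero (by omega : u.natDegree = 0), derivative_C, zero_eq_neg] at hu
    exact one_ne_zero hu

lemma kummerNondegenerate_pow_mul_sq_add_one_pow {u : K[X]} (hu : derivative u = -1) {d i j : ℕ}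
    (hd : (2 : K) = 0 → d.Coprime 2) (hij : ∀ k, 0 < k → k < d → d ∣ k * i → ¬ d ∣ k * j) :
    KummerNondegenerate d (u ^ i * (u ^ 2 + 1) ^ j) := by
  intro k hk hkd
  by_cases hi : d ∣ k * i
  · obtain ⟨π, hπ, hmult⟩ := exists_prime_multiplicity_pow_mul_sq_add_one_pow hu i j
    refine ⟨π, hπ, ?_⟩
    rcases hmult with hmult | ⟨h2, hmult⟩
    · rw [hmult]
      exact hij k hk hkd hi
    · rw [hmult, ← mul_assoc, (hd h2).dvd_mul_right]
      exact hij k hk hkd hi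
  · have hcop : IsCoprime u ((u ^ 2 + 1) ^ j) := IsCoprime.pow_right ⟨-u, 1, by ring⟩
    obtain ⟨π, hπ, hmult⟩ := exists_prime_multiplicity_pow_mul_eq
      (squarefree_of_derivative_eq_neg_one hu) (not_isUnit_of_derivative_eq_neg_one hu) hcop i
    exact ⟨π, hπ, by rwa [hmult]⟩

lemma derivative_X_pow_sub_X_add_C {q : ℕ} (hq : (q : K) = 0) (γ : K) :
    derivative (X ^ q - X + C γ : K[X]) = -1 := by
  simp [derivative_X_pow, hq]

lemma natDegree_X_pow_sub_X_add_C {q : ℕ} (hq : 1 < q) (γ : K) :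
    (X ^ q - X + C γ : K[X]).natDegree = q := by
  rw [natDegree_add_C, FiniteField.X_pow_card_sub_X_natDegree_eq K hq]

end Nondegeneracy

section Lifts

variable {F : Type*} [Field F] (L : Type*) [Field L] [Algebra F L]

/-- The lift `x ↦ χ (N x)` of multiplicative characters to an extension field through the norm. -/
noncomputable def normLift [Finite L] : MulChar F ℂ →* MulChar L ℂ where
  toFun χ :=
    { toFun x := χ (Algebra.norm F x)
      map_one' := by rw [map_one, map_one]
      map_mul' x y := by rw [map_mul, map_mul]
      map_nonunit' x hx := by
        rw [not_not.1 (mt Ne.isUnit hx), Algebra.norm_zero, MulChar.map_zero] }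
  map_one' := by
    ext x
    exact (MulChar.one_apply (x.isUnit.map (Algebra.norm F))).trans (MulChar.one_apply_coe x).symm
  map_mul' _ _ := rfl

/-- The lift `x ↦ ψ (Tr x)` of an additive character to an extension field through the trace. -/
noncomputable def traceLift (ψ : AddChar F ℂ) : AddChar L ℂ :=
  ψ.compAddMonoidHom (Algebra.trace F L).toAddMonoidHom

variable {L}

lemma traceLift_apply (ψ : AddChar F ℂ) (x : L) : traceLift L ψ x = ψ (Algebra.trace F L x) := rfl

variable [Finite L]

lemma normLift_apply (χ : MulChar F ℂ) (x : L) : normLift L χ x = χ (Algebra.norm F x) := rfl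

variable (L) in
lemma normLift_injective :
    Function.Injective (normLift L : MulChar F ℂ →* MulChar L ℂ) := fun χ χ' h => by
  ext a
  obtain ⟨x, hx⟩ := FiniteField.norm_surjective F L (a : F)
  rw [← hx, ← normLift_apply, h, normLift_apply]

lemma traceLift_ne_one [Finite F] {ψ : AddChar F ℂ} (hψ : ψ ≠ 1) : traceLift L ψ ≠ 1 := fun h =>
  hψ <| by
    ext c
    obtain ⟨x, rfl⟩ := Algebra.trace_surjective F L c
    exact DFunLike.congr_fun h x

end Lifts

section MixedSum

/-- The mixed character sum of the Cohen–Gupta criterion. -/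
noncomputable def mixedSum {L : Type*} [Field L] [Fintype L] (χ₁ χ₂ : MulChar L ℂ)
    (ψ : AddChar L ℂ) : ℂ :=
  ∑ x : L, χ₁ x * χ₂ (x ^ 2 + 1) * ψ x

variable {F : Type*} [Field F]

lemma exists_mulChar_generating_pair [Finite F] (χ₁ χ₂ : MulChar F ℂ) :
    ∃ (χ : MulChar F ℂ) (i j : ℕ), 0 < i ∧ 0 < j ∧ χ₁ = χ ^ i ∧ χ₂ = χ ^ j ∧
      ∃ a b : ℤ, χ₁ ^ a * χ₂ ^ b = χ := by
  classical
  have := Fintype.ofFinite F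
  have hcyclic : IsCyclic (MulChar F ℂ) := by
    obtain ⟨e⟩ := MulChar.mulEquiv_units F ℂ
    exact isCyclic_of_surjective e.symm e.symm.surjective
  obtain ⟨⟨χ, hχ⟩, hgen⟩ := IsCyclic.exists_generator (α := Subgroup.closure {χ₁, χ₂})
  have hpow : ∀ η ∈ Subgroup.closure {χ₁, χ₂}, ∃ i : ℕ, 0 < i ∧ η = χ ^ i := by
    intro η hη
    obtain ⟨t, ht⟩ := (mem_zpowers_iff_mem_range_orderOf.1 (hgen ⟨η, hη⟩) |> Finset.mem_image.1)
    refine ⟨t + orderOf χ, Nat.add_pos_right _ χ.orderOf_pos, ?_⟩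
    rw [pow_add, pow_orderOf_eq_one, mul_one]
    exact congrArg Subtype.val ht.2.symm
  obtain ⟨i, hi, hχ₁⟩ := hpow χ₁ (Subgroup.subset_closure (by simp))
  obtain ⟨j, hj, hχ₂⟩ := hpow χ₂ (Subgroup.subset_closure (by simp))
  exact ⟨χ, i, j, hi, hj, hχ₁, hχ₂, Subgroup.mem_closure_pair.1 hχ⟩

lemma not_orderOf_dvd_mul_of_zpow_mul_zpow_eq {G : Type*} [CommGroup G] {g g₁ g₂ : G} {i j : ℕ}
    (h₁ : g₁ = g ^ i) (h₂ : g₂ = g ^ j) {a b : ℤ} (hab : g₁ ^ a * g₂ ^ b = g) {k : ℕ}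
    (hk : 0 < k) (hkd : k < orderOf g) (hi : orderOf g ∣ k * i) : ¬ orderOf g ∣ k * j := by
  intro hj
  rw [mul_comm, orderOf_dvd_iff_pow_eq_one, pow_mul, ← h₁] at hi
  rw [mul_comm, orderOf_dvd_iff_pow_eq_one, pow_mul, ← h₂] at hj
  refine pow_ne_one_of_lt_orderOf hk.ne' hkd ?_
  rw [← hab, mul_pow, ← zpow_natCast, ← zpow_natCast, zpow_comm, zpow_comm g₂, zpow_natCast,
    zpow_natCast, hi, hj, one_zpow, one_zpow, one_mul]

variable [Fintype F]

lemma coprime_two_of_dvd_card_sub_one {d : ℕ} (hd : d ∣ Fintype.card F - 1) (h2 : (2 : F) = 0) :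
    d.Coprime 2 := by
  have hchar : CharP F 2 := CharTwo.of_one_ne_zero_of_two_eq_zero one_ne_zero h2
  have heven : 2 ∣ Fintype.card F :=
    (CharP.cast_eq_zero_iff F 2 _).1 (FiniteField.cast_card_eq_zero F)
  have hpos := Fintype.card_pos (α := F)
  refine Nat.Coprime.coprime_dvd_left hd ?_
  rw [Nat.coprime_two_right, Nat.odd_iff]
  omega

variable {L : Type*} [Field L] [Fintype L] [Algebra F L]

lemma norm_sum_trace_fiber_le [DecidableEq F] {m : ℕ}
    (hcard : Fintype.card L = (Fintype.card F ^ m) ^ 2) {η : MulChar L ℂ} (hη : η ≠ 1)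
    (hdvd : orderOf η ∣ Fintype.card F - 1) {i j : ℕ}
    (hij : ∀ k, 0 < k → k < orderOf η → orderOf η ∣ k * i → ¬ orderOf η ∣ k * j) (c : F) :
    Fintype.card F * ‖∑ x : L with Algebra.trace F L x = c, η (x ^ i * (x ^ 2 + 1) ^ j)‖ ≤
      stepanovConstant (orderOf η) (Fintype.card F * (i + 2 * j)) *
        (Fintype.card F : ℝ) ^ m := by
  obtain ⟨p, hp⟩ := CharP.exists F
  have : Fact p.Prime := ⟨CharP.char_is_prime F p⟩
  have : CharP L p := charP_of_injective_algebraMap (algebraMap F L).injective p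
  obtain ⟨ν, -, hν⟩ := FiniteField.card F p
  obtain ⟨γ, rfl⟩ := Algebra.trace_surjective F L c
  set u : L[X] := X ^ Fintype.card F - X + C γ with hu
  have hqL : (Fintype.card F : L) = 0 := by
    rw [← map_natCast (algebraMap F L), FiniteField.cast_card_eq_zero F, map_zero]
  have h2 : (2 : L) = 0 → (orderOf η).Coprime 2 := fun h =>
    coprime_two_of_dvd_card_sub_one hdvd <|
      (algebraMap F L).injective (by rw [map_ofNat, map_zero, h])
  have hu' : derivative u = -1 := derivative_X_pow_sub_X_add_C hqL γ
  have hudeg : u.natDegree = Fintype.card F :=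
    natDegree_X_pow_sub_X_add_C Fintype.one_lt_card γ
  have hu0 : u ≠ 0 := ne_zero_of_natDegree_gt (hudeg ▸ Fintype.card_pos)
  have hu1 : u ^ 2 + 1 ≠ 0 := ne_zero_of_natDegree_gt (n := 0) <| by
    rw [natDegree_sq_add_one, hudeg]
    exact Nat.mul_pos two_pos Fintype.card_pos
  have hdeg : (u ^ i * (u ^ 2 + 1) ^ j).natDegree = Fintype.card F * (i + 2 * j) := by
    rw [natDegree_mul (pow_ne_zero _ hu0) (pow_ne_zero _ hu1), natDegree_pow, natDegree_pow,
      natDegree_sq_add_one, hudeg]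
    ring
  have hbound := norm_sum_mulChar_eval_le (p := p) (μ := ν * m) (by rw [hν, pow_mul]) hcard hη
    (hdvd.trans (by simpa using Nat.sub_dvd_pow_sub_pow (Fintype.card F) 1 m))
    (kummerNondegenerate_pow_mul_sq_add_one_pow hu' h2 hij)
    (mul_ne_zero (pow_ne_zero _ hu0) (pow_ne_zero _ hu1))
  have heval : ∀ x : L, (u ^ i * (u ^ 2 + 1) ^ j).eval x =
      (x ^ Fintype.card F - x + γ) ^ i * ((x ^ Fintype.card F - x + γ) ^ 2 + 1) ^ j := fun x => by
    simp [hu]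
  simp only [heval] at hbound
  rwa [sum_pow_card_sub_add (F := F) fun x : L => η (x ^ i * (x ^ 2 + 1) ^ j), norm_mul,
    Complex.norm_natCast, hdeg, Nat.cast_pow] at hbound

lemma mixedSum_pow_pow_eq_sum_trace [DecidableEq F] (η : MulChar L ℂ) (ψ : AddChar F ℂ) {i j : ℕ}
    (hi : i ≠ 0) (hj : j ≠ 0) :
    mixedSum (η ^ i) (η ^ j) (traceLift L ψ) = ∑ c : F, ψ c *
      ∑ x : L with Algebra.trace F L x = c, η (x ^ i * (x ^ 2 + 1) ^ j) := by
  rw [mixedSum, ← Finset.sum_fiberwise Finset.univ fun x : L => Algebra.trace F L x]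
  refine Finset.sum_congr rfl fun c _ => ?_
  rw [Finset.mul_sum]
  refine Finset.sum_congr rfl fun x hx => ?_
  rw [MulChar.pow_apply' _ hi, MulChar.pow_apply' _ hj, traceLift_apply,
    (Finset.mem_filter.1 hx).2, map_mul, map_pow, map_pow, mul_comm]

lemma norm_mixedSum_pow_pow_le {m : ℕ} (hcard : Fintype.card L = (Fintype.card F ^ m) ^ 2)
    {η : MulChar L ℂ} (hη : η ≠ 1) (hdvd : orderOf η ∣ Fintype.card F - 1) {i j : ℕ}
    (hi : i ≠ 0) (hj : j ≠ 0)
    (hij : ∀ k, 0 < k → k < orderOf η → orderOf η ∣ k * i → ¬ orderOf η ∣ k * j)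
    (ψ : AddChar F ℂ) :
    ‖mixedSum (η ^ i) (η ^ j) (traceLift L ψ)‖ ≤
      stepanovConstant (orderOf η) (Fintype.card F * (i + 2 * j)) *
        (Fintype.card F : ℝ) ^ m := by
  classical
  have hq : (0 : ℝ) < Fintype.card F := by exact_mod_cast Fintype.card_pos (α := F)
  refine le_of_mul_le_mul_left ?_ hq
  rw [mixedSum_pow_pow_eq_sum_trace η ψ hi hj]
  calc Fintype.card F * ‖∑ c : F, ψ c *
        ∑ x : L with Algebra.trace F L x = c, η (x ^ i * (x ^ 2 + 1) ^ j)‖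
      ≤ ∑ c : F, Fintype.card F *
          ‖∑ x : L with Algebra.trace F L x = c, η (x ^ i * (x ^ 2 + 1) ^ j)‖ := by
        rw [← Finset.mul_sum]
        gcongr
        refine (norm_sum_le _ _).trans_eq (Finset.sum_congr rfl fun c _ => ?_)
        rw [norm_mul, AddChar.norm_apply, one_mul]
    _ ≤ ∑ _c : F, stepanovConstant (orderOf η) (Fintype.card F * (i + 2 * j)) *
          (Fintype.card F : ℝ) ^ m :=
        Finset.sum_le_sum fun c _ => norm_sum_trace_fiber_le hcard hη hdvd hij c
    _ = _ := by rw [Finset.sum_const, Finset.card_univ, nsmul_eq_mul]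

lemma exists_norm_mixedSum_lift_le {χ₁ χ₂ : MulChar F ℂ} (hne : ¬ (χ₁ = 1 ∧ χ₂ = 1))
    (ψ : AddChar F ℂ) :
    ∃ K : ℝ, ∀ (L : Type*) [Field L] [Fintype L] [Algebra F L] (m : ℕ),
      Fintype.card L = (Fintype.card F ^ m) ^ 2 →
      ‖mixedSum (normLift L χ₁) (normLift L χ₂) (traceLift L ψ)‖ ≤
        K * (Fintype.card F : ℝ) ^ m := by
  classical
  obtain ⟨χ, i, j, hi, hj, h₁, h₂, a, b, hab⟩ := exists_mulChar_generating_pair χ₁ χ₂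
  refine ⟨stepanovConstant (orderOf χ) (Fintype.card F * (i + 2 * j)), fun L _ _ _ m hcard => ?_⟩
  have horder : orderOf (normLift L χ) = orderOf χ := orderOf_injective _ (normLift_injective L) χ
  have hχ : normLift L χ ≠ 1 := fun h => hne <| by
    rw [h₁, h₂, (map_eq_one_iff _ (normLift_injective L)).1 h, one_pow, one_pow]
    exact ⟨rfl, rfl⟩
  rw [h₁, h₂, map_pow, map_pow, ← horder]
  exact norm_mixedSum_pow_pow_le hcard hχ (horder ▸ χ.orderOf_dvd_card_sub_one) hi.ne' hj.ne'
    (horder ▸ fun _ => not_orderOf_dvd_mul_of_zpow_mul_zpow_eq h₁ h₂ hab) ψ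

lemma norm_mixedSum_one_one_le {Ψ : AddChar L ℂ} (hΨ : Ψ ≠ 1) :
    ‖mixedSum (1 : MulChar L ℂ) 1 Ψ‖ ≤ 3 := by
  classical
  set g : L[X] := X * (X ^ 2 + 1) with hg
  have hdeg : (X ^ 2 + 1 : L[X]).natDegree = 2 := by rw [natDegree_sq_add_one, natDegree_X]
  have hne : (X ^ 2 + 1 : L[X]) ≠ 0 := ne_zero_of_natDegree_gt (n := 0) (by omega)
  have hgdeg : g.natDegree = 3 := by rw [hg, natDegree_mul X_ne_zero hne, natDegree_X, hdeg]
  have hterm : ∀ x : L, (1 : MulChar L ℂ) x * (1 : MulChar L ℂ) (x ^ 2 + 1) * Ψ x =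
      Ψ x - if x ∈ g.roots.toFinset then Ψ x else 0 := fun x => by
    have hmem : x ∈ g.roots.toFinset ↔ x = 0 ∨ x ^ 2 + 1 = 0 := by
      rw [Multiset.mem_toFinset, mem_roots (mul_ne_zero X_ne_zero hne)]
      simp
    rcases eq_or_ne x 0 with hx | hx
    · rw [if_pos (hmem.2 (.inl hx)), hx, MulChar.map_zero, zero_mul, zero_mul, sub_self]
    rcases eq_or_ne (x ^ 2 + 1) 0 with hx2 | hx2
    · rw [if_pos (hmem.2 (.inr hx2)), hx2, MulChar.map_zero, mul_zero, zero_mul, sub_self]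
    · rw [if_neg (by tauto), MulChar.one_apply hx.isUnit, MulChar.one_apply hx2.isUnit, one_mul,
        one_mul, sub_zero]
  have hsum : mixedSum (1 : MulChar L ℂ) 1 Ψ = -∑ x ∈ g.roots.toFinset, Ψ x := by
    rw [mixedSum, Finset.sum_congr rfl fun x _ => hterm x, Finset.sum_sub_distrib,
      AddChar.sum_eq_zero_iff_ne_zero.2 hΨ, zero_sub, Finset.sum_ite_mem, Finset.univ_inter]
  rw [hsum, norm_neg]
  calc ‖∑ x ∈ g.roots.toFinset, Ψ x‖ ≤ ∑ x ∈ g.roots.toFinset, ‖Ψ x‖ := norm_sum_le _ _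
    _ = g.roots.toFinset.card := by
        simp only [AddChar.norm_apply, Finset.sum_const, nsmul_eq_mul, mul_one]
    _ ≤ 3 := by exact_mod_cast hgdeg ▸ (Multiset.toFinset_card_le _).trans (card_roots' g)

lemma exists_norm_mixedSum_lift_le_of_ne_one {χ₁ χ₂ : MulChar F ℂ} {ψ : AddChar F ℂ}
    (hne : ¬ (χ₁ = 1 ∧ χ₂ = 1 ∧ ψ = 1)) :
    ∃ K : ℝ, ∀ (L : Type*) [Field L] [Fintype L] [Algebra F L] (m : ℕ),
      Fintype.card L = (Fintype.card F ^ m) ^ 2 →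
      ‖mixedSum (normLift L χ₁) (normLift L χ₂) (traceLift L ψ)‖ ≤
        K * (Fintype.card F : ℝ) ^ m := by
  by_cases hmul : χ₁ = 1 ∧ χ₂ = 1
  · obtain ⟨rfl, rfl⟩ := hmul
    refine ⟨3, fun L _ _ _ m _ => ?_⟩
    have hψ : ψ ≠ 1 := fun h => hne ⟨rfl, rfl, h⟩
    have hone : (1 : ℝ) ≤ (Fintype.card F : ℝ) ^ m :=
      one_le_pow₀ (by exact_mod_cast Fintype.card_pos (α := F))
    calc ‖mixedSum (normLift L 1) (normLift L 1) (traceLift L ψ)‖ ≤ 3 := by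
          rw [map_one]
          exact norm_mixedSum_one_one_le (traceLift_ne_one hψ)
      _ ≤ 3 * (Fintype.card F : ℝ) ^ m := by linarith
  · exact exists_norm_mixedSum_lift_le hmul ψ

end MixedSum

/-! ### Power sums and Newton's identities -/

section PowerSums

open Finset.HasAntidiagonal (antidiagonal)

lemma exists_esymm_eq_of_coeff_zero_eq_one {K : Type*} [Field K] [IsAlgClosed K] {c : ℕ → K}
    {M : ℕ} (hc0 : c 0 = 1) (hcM : ∀ n, M < n → c n = 0) :
    ∃ α : Fin M → K, ∀ n, c n = (-1) ^ n * (Finset.univ.val.map α).esymm n := by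
  set p : K[X] := ∑ i ∈ Finset.range (M + 1), monomial (M - i) (c i)
  have hcoeff : ∀ j ≤ M, p.coeff (M - j) = c j := fun j hj => by
    rw [finsetSum_coeff, Finset.sum_eq_single_of_mem j (Finset.mem_range.2 (by omega)),
      coeff_monomial, if_pos rfl]
    intro i hi hij
    rw [coeff_monomial, if_neg (by have := Finset.mem_range.1 hi; omega)]
  have hdegle : p.natDegree ≤ M := natDegree_sum_le_of_forall_le _ _ fun i _ =>
    (natDegree_monomial_le _).trans (Nat.sub_le M i)
  have hcoeffM : p.coeff M = 1 := (hcoeff 0 M.zero_le).trans hc0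
  have hdeg : p.natDegree = M :=
    natDegree_eq_of_le_of_coeff_ne_zero hdegle (hcoeffM ▸ one_ne_zero)
  have hmonic : p.Monic := monic_of_natDegree_le_of_coeff_eq_one M hdegle hcoeffM
  have hsplits := IsAlgClosed.splits p
  have hcard : p.roots.card = M := hsplits.natDegree_eq_card_roots ▸ hdeg
  obtain ⟨l, hl⟩ := Quot.exists_rep p.roots
  have hroots : (l : Multiset K) = p.roots := hl
  obtain rfl : l.length = M := by rw [← hcard, ← hroots, Multiset.coe_card]
  refine ⟨l.get, fun n => ?_⟩
  rw [Fin.univ_val_map, List.ofFn_get, hroots]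
  rcases le_or_gt n l.length with hn | hn
  · rw [← hcoeff n hn, coeff_eq_esymm_roots_of_splits hsplits (hdeg ▸ Nat.sub_le _ n),
      hmonic.leadingCoeff, one_mul, hdeg, Nat.sub_sub_self hn]
  · rw [hcM n hn, Multiset.esymm, Multiset.powersetCard_eq_empty n (hcard ▸ hn), Multiset.map_zero,
      Multiset.sum_zero, mul_zero]

lemma natCast_mul_esymm_eq_neg_sum {K : Type*} [CommRing K] {M : ℕ} (α : Fin M → K) (n : ℕ) :
    (n : K) * ((-1) ^ n * (Finset.univ.val.map α).esymm n) =
      ∑ a ∈ antidiagonal n with a.1 < n,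
        (-1) ^ a.1 * (Finset.univ.val.map α).esymm a.1 * -∑ i, α i ^ a.2 := by
  have hnewton := congrArg (MvPolynomial.aeval α) (MvPolynomial.mul_esymm_eq_sum (Fin M) K n)
  simp only [map_mul, map_sum, map_pow, map_neg, map_one, map_natCast, MvPolynomial.psum,
    MvPolynomial.aeval_X, MvPolynomial.aeval_esymm_eq_multiset_esymm] at hnewton
  have hsign : ((-1 : K) ^ n) * (-1) ^ (n + 1) = -1 := by
    rw [← pow_add, Odd.neg_one_pow ⟨n, by ring⟩]
  rw [mul_left_comm, hnewton, ← mul_assoc, hsign, neg_one_mul, ← Finset.sum_neg_distrib]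
  simp only [mul_neg]

lemma exists_eq_neg_sum_pow_of_newton {K : Type*} [Field K] [IsAlgClosed K] {c S : ℕ → K} {M : ℕ}
    (hc0 : c 0 = 1) (hcM : ∀ n, M < n → c n = 0)
    (hrec : ∀ n : ℕ, (n : K) * c n = ∑ a ∈ antidiagonal n with a.1 < n, c a.1 * S a.2) :
    ∃ α : Fin M → K, ∀ k, 0 < k → S k = -∑ i, α i ^ k := by
  obtain ⟨α, hα⟩ := exists_esymm_eq_of_coeff_zero_eq_one hc0 hcM
  have hrec' : ∀ n : ℕ, (n : K) * c n =
      ∑ a ∈ antidiagonal n with a.1 < n, c a.1 * -∑ i, α i ^ a.2 := fun n => by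
    simp only [hα]
    exact natCast_mul_esymm_eq_neg_sum α n
  refine ⟨α, fun k => Nat.strong_induction_on k fun n ih hn => ?_⟩
  have hmem : ((0, n) : ℕ × ℕ) ∈ (antidiagonal n).filter fun a => a.1 < n := by
    simpa using hn
  have hsum := (hrec n).symm.trans (hrec' n)
  rw [← Finset.add_sum_erase _ _ hmem, ← Finset.add_sum_erase _ _ hmem, hc0, one_mul, one_mul,
    Finset.sum_congr rfl fun a ha => ?_] at hsum
  · exact add_right_cancel hsum
  · obtain ⟨hne, ha⟩ := Finset.mem_erase.1 ha
    obtain ⟨hadd, hlt⟩ := Finset.mem_filter.1 ha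
    rw [Finset.HasAntidiagonal.mem_antidiagonal] at hadd
    have ha1 : a.1 ≠ 0 := fun h0 => hne (Prod.ext h0 (by omega))
    rw [ih a.2 (by omega) (by omega)]

variable {ι : Type*} [Fintype ι]

lemma exists_sum_coeff_mul_sum_pow_eq (β : ι → ℂ) (i : ι) :
    ∃ (Q : ℂ[X]) (r : ℕ), 0 < r ∧ ∀ m : ℕ,
      ∑ j ∈ Finset.range (Q.natDegree + 1), Q.coeff j * ∑ l, β l ^ (m + j) = r * β i ^ m := by
  classical
  set s : Finset ℂ := Finset.univ.image β
  set Q : ℂ[X] := Lagrange.basis (F := ℂ) s id (β i)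
  have hmem : ∀ l, β l ∈ s := fun l => Finset.mem_image_of_mem β (Finset.mem_univ l)
  have hQ : ∀ l, Q.eval (β l) = if β l = β i then 1 else 0 := fun l => by
    split_ifs with h
    · rw [h]
      exact Lagrange.eval_basis_self Function.injective_id.injOn (hmem i)
    · exact Lagrange.eval_basis_of_ne (F := ℂ) (v := id) (Ne.symm h) (hmem l)
  refine ⟨Q, (Finset.univ.filter fun l => β l = β i).card,
    Finset.card_pos.2 ⟨i, (Finset.mem_filter_univ i).2 rfl⟩, fun m => ?_⟩
  calc ∑ j ∈ Finset.range (Q.natDegree + 1), Q.coeff j * ∑ l, β l ^ (m + j)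
      = ∑ l, β l ^ m * Q.eval (β l) := by
        simp_rw [Finset.mul_sum, eval_eq_sum_range, Finset.mul_sum]
        rw [Finset.sum_comm]
        exact Finset.sum_congr rfl fun l _ => Finset.sum_congr rfl fun j _ => by ring
    _ = ∑ l with β l = β i, β i ^ m := by
        simp_rw [hQ, mul_ite, mul_one, mul_zero]
        rw [← Finset.sum_filter]
        exact Finset.sum_congr rfl fun l hl => by rw [(Finset.mem_filter.1 hl).2]
    _ = _ := by rw [Finset.sum_const, nsmul_eq_mul]

lemma norm_le_one_of_norm_sum_pow_le {β : ι → ℂ} {K : ℝ}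
    (hK : ∀ m : ℕ, 0 < m → ‖∑ i, β i ^ m‖ ≤ K) (i : ι) : ‖β i‖ ≤ 1 := by
  obtain ⟨Q, r, hr, hQ⟩ := exists_sum_coeff_mul_sum_pow_eq β i
  set B : ℝ := ∑ j ∈ Finset.range (Q.natDegree + 1), ‖Q.coeff j‖ * K
  have hbound : ∀ m : ℕ, 0 < m → ‖β i‖ ^ m ≤ B := fun m hm =>
    calc ‖β i‖ ^ m ≤ r * ‖β i‖ ^ m :=
          le_mul_of_one_le_left (by positivity) (by exact_mod_cast hr)
      _ = ‖∑ j ∈ Finset.range (Q.natDegree + 1), Q.coeff j * ∑ l, β l ^ (m + j)‖ := by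
          rw [hQ, norm_mul, norm_pow, Complex.norm_natCast]
      _ ≤ B := norm_sum_le_of_le _ fun j _ => by
          rw [norm_mul]
          gcongr
          exact hK _ (by omega)
  by_contra! hlt
  obtain ⟨m, hm⟩ := pow_unbounded_of_one_lt B hlt
  exact (hm.trans_le (pow_le_pow_right₀ hlt.le m.le_succ)).not_ge (hbound _ m.succ_pos)

lemma norm_sum_le_card_mul_of_norm_sum_pow_le {α : ι → ℂ} {K ρ : ℝ} (hρ : 0 < ρ)
    (hK : ∀ m : ℕ, 0 < m → ‖∑ i, α i ^ (2 * m)‖ ≤ K * (ρ ^ 2) ^ m) :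
    ‖∑ i, α i‖ ≤ Fintype.card ι * ρ := by
  have hnorm : ‖((ρ : ℂ) ^ 2)‖ = ρ ^ 2 := by
    rw [norm_pow, Complex.norm_real, Real.norm_of_nonneg hρ.le]
  have hscaled : ∀ i, ‖α i ^ 2 / (ρ : ℂ) ^ 2‖ ≤ 1 := fun i =>
    norm_le_one_of_norm_sum_pow_le (β := fun i => α i ^ 2 / (ρ : ℂ) ^ 2) (K := K)
      (fun m hm => by
        simp_rw [div_pow (_ ^ 2), ← pow_mul (α _)]
        rw [← Finset.sum_div, norm_div, norm_pow _ m, hnorm, div_le_iff₀ (by positivity)]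
        exact hK m hm) i
  refine (norm_sum_le_of_le (n := fun _ => ρ) _ fun i _ => ?_).trans_eq (by simp)
  have := hscaled i
  rw [norm_div, hnorm, norm_pow, div_le_one (by positivity)] at this
  exact le_of_sq_le_sq this hρ.le

end PowerSums

/-! ### The `L`-function of a multiplicative weight on monic polynomials -/

section LFunction

open Finset.HasAntidiagonal (antidiagonal)
open UniqueFactorizationMonoid (normalizedFactors)

/-- A weight on `F[X]` which is multiplicative on monic polynomials; such a weight has an
`L`-function `∑ w f T ^ deg f`, the sum being over monic `f`. -/
structure IsMonicMultiplicative {F R : Type*} [Field F] [CommRing R] (w : F[X] → R) : Prop where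
  map_one : w 1 = 1
  map_mul : ∀ {f g : F[X]}, f.Monic → g.Monic → w (f * g) = w f * w g

lemma IsMonicMultiplicative.map_pow {F R : Type*} [Field F] [CommRing R] {w : F[X] → R}
    (hw : IsMonicMultiplicative w) {f : F[X]} (hf : f.Monic) (a : ℕ) : w (f ^ a) = w f ^ a := by
  induction a with
  | zero => rw [pow_zero, pow_zero, hw.map_one]
  | succ a ih => rw [pow_succ, hw.map_mul (hf.pow a) hf, ih, pow_succ]

section NormalizedFactors

variable {F : Type*} [Field F] [DecidableEq F]

lemma monic_of_mem_normalizedFactors {f P : F[X]} (hP : P ∈ normalizedFactors f) : P.Monic :=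
  UniqueFactorizationMonoid.normalize_normalized_factor P hP ▸
    monic_normalize (UniqueFactorizationMonoid.irreducible_of_normalized_factor P hP).ne_zero

lemma natDegree_eq_sum_count_mul {f : F[X]} (hf : f.Monic) :
    f.natDegree =
      ∑ P ∈ (normalizedFactors f).toFinset, (normalizedFactors f).count P * P.natDegree := by
  have hmonic : (normalizedFactors f).prod.Monic := by
    simpa using
      monic_multiset_prod_of_monic (normalizedFactors f) id fun _ => monic_of_mem_normalizedFactors
  have hprod : (normalizedFactors f).prod = f := eq_of_monic_of_associated hmonic hf
    (UniqueFactorizationMonoid.prod_normalizedFactors hf.ne_zero)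
  conv_lhs => rw [← hprod]
  rw [natDegree_multiset_prod_of_monic _ fun _ => monic_of_mem_normalizedFactors,
    Finset.sum_multiset_map_count]
  rfl

lemma pow_dvd_iff_le_count_normalizedFactors {f P : F[X]} (hf : f ≠ 0)
    (hP : P.Monic) (hirr : Irreducible P) (a : ℕ) :
    P ^ a ∣ f ↔ a ≤ (normalizedFactors f).count P := by
  rw [pow_dvd_iff_le_emultiplicity,
    UniqueFactorizationMonoid.emultiplicity_eq_count_normalizedFactors hirr hf,
    hP.normalize_eq_self, Nat.cast_le]

end NormalizedFactors

lemma finite_setOf_monic_natDegree_eq (F : Type*) [Field F] [Finite F] (n : ℕ) :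
    {f : F[X] | f.Monic ∧ f.natDegree = n}.Finite := by
  refine Set.Finite.of_finite_image (f := fun f : F[X] => fun i : Fin (n + 1) => f.coeff i)
    (Set.toFinite _) fun f hf g hg hfg => ?_
  refine (ext_iff_natDegree_le hf.2.le hg.2.le).2 fun i hi => ?_
  exact congrFun hfg ⟨i, Nat.lt_succ_of_le hi⟩

variable {F R : Type*} [Field F] [Finite F] [CommRing R]

/-- The monic polynomials of degree `n` over a finite field. -/
noncomputable def monicOfDegree (F : Type*) [Field F] [Finite F] (n : ℕ) : Finset F[X] :=
  (finite_setOf_monic_natDegree_eq F n).toFinset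

lemma mem_monicOfDegree {n : ℕ} {f : F[X]} : f ∈ monicOfDegree F n ↔ f.Monic ∧ f.natDegree = n :=
  Set.Finite.mem_toFinset _

/-- The coefficient of `T ^ n` in the `L`-function of the weight `w`. -/
noncomputable def coeffSum (w : F[X] → R) (n : ℕ) : R :=
  ∑ f ∈ monicOfDegree F n, w f

open Classical in
/-- The powers of degree `k` of monic irreducible polynomials; the pair `(P, a)` stands for
`P ^ a`, with `a` positive. -/
noncomputable def primePowers (F : Type*) [Field F] [Finite F] (k : ℕ) : Finset (F[X] × ℕ) :=
  ((Finset.range (k + 1)).biUnion (monicOfDegree F) ×ˢ Finset.range (k + 1)).filter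
    fun p => Irreducible p.1 ∧ 0 < p.2 ∧ p.2 * p.1.natDegree = k

lemma mem_primePowers {k : ℕ} {p : F[X] × ℕ} :
    p ∈ primePowers F k ↔
      p.1.Monic ∧ Irreducible p.1 ∧ 0 < p.2 ∧ p.2 * p.1.natDegree = k := by
  simp only [primePowers, Finset.mem_filter, Finset.mem_product, Finset.mem_biUnion,
    Finset.mem_range, mem_monicOfDegree]
  constructor
  · rintro ⟨⟨⟨_, -, hmonic, -⟩, -⟩, hirr, hpos, hk⟩
    exact ⟨hmonic, hirr, hpos, hk⟩
  · rintro ⟨hmonic, hirr, hpos, rfl⟩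
    have hdeg := hirr.natDegree_pos
    exact ⟨⟨⟨p.1.natDegree, Nat.lt_succ_of_le (Nat.le_mul_of_pos_left _ hpos), hmonic, rfl⟩,
      Nat.lt_succ_of_le (Nat.le_mul_of_pos_right _ hdeg)⟩, hirr, hpos, rfl⟩

/-- The coefficient of `T ^ k` in `T` times the logarithmic derivative of the `L`-function of
`w`. -/
noncomputable def primePowerSum (w : F[X] → R) (k : ℕ) : R :=
  ∑ p ∈ primePowers F k, p.1.natDegree * w p.1 ^ p.2

lemma primePowerSum_zero (w : F[X] → R) : primePowerSum w 0 = 0 :=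
  Finset.sum_eq_zero fun p hp => by
    obtain ⟨-, hirr, hpos, h0⟩ := mem_primePowers.1 hp
    exact absurd h0 (Nat.mul_pos hpos hirr.natDegree_pos).ne'

lemma coeffSum_zero {w : F[X] → R} (hw : IsMonicMultiplicative w) : coeffSum w 0 = 1 := by
  have : monicOfDegree F 0 = {1} := by
    ext f
    rw [mem_monicOfDegree, Finset.mem_singleton]
    exact ⟨fun hf => hf.1.natDegree_eq_zero.1 hf.2, fun h => h ▸ ⟨monic_one, natDegree_one⟩⟩
  rw [coeffSum, this, Finset.sum_singleton, hw.map_one]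

open Classical in
lemma natDegree_eq_sum_primePowers {f : F[X]} (hf : f.Monic) :
    f.natDegree = ∑ j ∈ Finset.range (f.natDegree + 1),
      ∑ p ∈ primePowers F j with p.1 ^ p.2 ∣ f, p.1.natDegree := by
  rw [← Finset.sum_biUnion,
    Finset.sum_finset_product _ (normalizedFactors f).toFinset
      fun P => Finset.Icc 1 ((normalizedFactors f).count P)]
  · simp only [Finset.sum_const, Nat.card_Icc, Nat.add_sub_cancel, smul_eq_mul]
    exact natDegree_eq_sum_count_mul hf
  · rintro ⟨P, a⟩
    simp only [Finset.mem_biUnion, Finset.mem_range, Finset.mem_filter, mem_primePowers,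
      Multiset.mem_toFinset, Finset.mem_Icc]
    constructor
    · rintro ⟨_, -, ⟨hP, hirr, hpos, -⟩, hdvd⟩
      have hcount := (pow_dvd_iff_le_count_normalizedFactors hf.ne_zero hP hirr a).1 hdvd
      exact ⟨Multiset.count_pos.1 (by omega), hpos, hcount⟩
    · rintro ⟨hmem, hpos, hcount⟩
      have hP := monic_of_mem_normalizedFactors hmem
      have hirr := UniqueFactorizationMonoid.irreducible_of_normalized_factor P hmem
      have hdvd := (pow_dvd_iff_le_count_normalizedFactors hf.ne_zero hP hirr a).2 hcount
      have hdeg := natDegree_le_of_dvd hdvd hf.ne_zero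
      rw [natDegree_pow] at hdeg
      exact ⟨_, Nat.lt_succ_of_le hdeg, ⟨hP, hirr, hpos, rfl⟩, hdvd⟩
  · intro i _ j _ hij
    refine Finset.disjoint_left.2 fun p hi hj => hij ?_
    obtain ⟨-, -, -, rfl⟩ := mem_primePowers.1 (Finset.mem_filter.1 hi).1
    exact (mem_primePowers.1 (Finset.mem_filter.1 hj).1).2.2.2

open Classical in
lemma sum_filter_dvd_eq_mul_coeffSum {w : F[X] → R} (hw : IsMonicMultiplicative w) {g : F[X]}
    (hg : g.Monic) {n : ℕ} (hn : g.natDegree ≤ n) :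
    ∑ f ∈ monicOfDegree F n with g ∣ f, w f = w g * coeffSum w (n - g.natDegree) := by
  rw [coeffSum, Finset.mul_sum]
  symm
  refine Finset.sum_bij (fun h _ => g * h) (fun h hh => ?_)
    (fun _ _ _ _ => mul_left_cancel₀ hg.ne_zero) (fun f hf => ?_) fun h hh =>
      (hw.map_mul hg (mem_monicOfDegree.1 hh).1).symm
  · obtain ⟨hmonic, hdeg⟩ := mem_monicOfDegree.1 hh
    refine Finset.mem_filter.2 ⟨mem_monicOfDegree.2 ⟨hg.mul hmonic, ?_⟩, dvd_mul_right _ _⟩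
    rw [hg.natDegree_mul hmonic, hdeg, Nat.add_sub_cancel' hn]
  · obtain ⟨hf, h, rfl⟩ := Finset.mem_filter.1 hf
    obtain ⟨hmonic, hdeg⟩ := mem_monicOfDegree.1 hf
    have hh : h.Monic := hg.of_mul_monic_left hmonic
    rw [hg.natDegree_mul hh] at hdeg
    exact ⟨h, mem_monicOfDegree.2 ⟨hh, by omega⟩, rfl⟩

lemma natCast_mul_coeffSum {w : F[X] → R} (hw : IsMonicMultiplicative w) (n : ℕ) :
    (n : R) * coeffSum w n =
      ∑ j ∈ Finset.range (n + 1), primePowerSum w j * coeffSum w (n - j) := by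
  classical
  calc (n : R) * coeffSum w n
      = ∑ f ∈ monicOfDegree F n, ∑ j ∈ Finset.range (n + 1),
          ∑ p ∈ primePowers F j with p.1 ^ p.2 ∣ f, p.1.natDegree * w f := by
        rw [coeffSum, Finset.mul_sum]
        refine Finset.sum_congr rfl fun f hf => ?_
        obtain ⟨hmonic, rfl⟩ := mem_monicOfDegree.1 hf
        conv_lhs => rw [natDegree_eq_sum_primePowers hmonic]
        push_cast
        simp only [Finset.sum_mul]
    _ = ∑ j ∈ Finset.range (n + 1), ∑ p ∈ primePowers F j,
          p.1.natDegree * ∑ f ∈ monicOfDegree F n with p.1 ^ p.2 ∣ f, w f := by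
        rw [Finset.sum_comm]
        refine Finset.sum_congr rfl fun j _ => ?_
        simp only [Finset.sum_filter, Finset.mul_sum, mul_ite, mul_zero]
        rw [Finset.sum_comm]
    _ = _ := by
        refine Finset.sum_congr rfl fun j hj => ?_
        rw [primePowerSum, Finset.sum_mul]
        refine Finset.sum_congr rfl fun p hp => ?_
        obtain ⟨hmonic, -, -, hdeg⟩ := mem_primePowers.1 hp
        rw [← hmonic.natDegree_pow] at hdeg
        rw [sum_filter_dvd_eq_mul_coeffSum hw (hmonic.pow p.2)
          (hdeg ▸ Finset.mem_range_succ_iff.1 hj), hdeg, hw.map_pow hmonic, mul_assoc]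

lemma exists_primePowerSum_eq_neg_sum_pow {w : F[X] → ℂ} (hw : IsMonicMultiplicative w) {M : ℕ}
    (hM : ∀ n, M < n → coeffSum w n = 0) :
    ∃ α : Fin M → ℂ, ∀ k, 0 < k → primePowerSum w k = -∑ i, α i ^ k := by
  refine exists_eq_neg_sum_pow_of_newton (coeffSum_zero hw) hM fun n => ?_
  rw [natCast_mul_coeffSum hw, Finset.sum_filter_of_ne,
    ← Finset.Nat.sum_antidiagonal_swap, Finset.Nat.sum_antidiagonal_eq_sum_range_succ_mk]
  · exact Finset.sum_congr rfl fun j _ => mul_comm _ _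
  · intro a ha hne
    rw [Finset.HasAntidiagonal.mem_antidiagonal] at ha
    have : a.2 ≠ 0 := fun h0 => hne (by rw [h0, primePowerSum_zero, mul_zero])
    omega

end LFunction

/-! ### Conjugacy classes in an extension and norms as resultants -/

section MinpolyFibres

variable {F L : Type*} [Field F] [Finite F] [Field L] [Fintype L] [Algebra F L]

lemma card_minpoly_eq [DecidableEq F[X]] {P : F[X]} (hP : P.Monic) (hirr : Irreducible P)
    (hdvd : P.natDegree ∣ Module.finrank F L) :
    (Finset.univ.filter fun x : L => minpoly F x = P).card = P.natDegree := by
  classical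
  have hcard : Fintype.card L = Nat.card F ^ Module.finrank F L := by
    rw [← Nat.card_eq_fintype_card, Module.natCard_eq_pow_finrank (K := F)]
  have hdvdX : P.map (algebraMap F L) ∣ X ^ Fintype.card L - X := by
    simpa [hcard] using map_dvd (mapRingHom (algebraMap F L))
      (hirr.natDegree_dvd_iff_dvd_X_pow_card_pow_sub_X.1 hdvd)
  have hsplits : (X ^ Fintype.card L - X : L[X]).Splits := by
    rw [splits_iff_card_roots, FiniteField.roots_X_pow_card_sub_X,
      FiniteField.X_pow_card_sub_X_natDegree_eq L Fintype.one_lt_card]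
    rfl
  rw [← card_rootSet_eq_natDegree (PerfectField.separable_of_irreducible hirr)
    (hsplits.of_dvd (FiniteField.X_pow_card_sub_X_ne_zero L Fintype.one_lt_card) hdvdX),
    ← Set.toFinset_card]
  congr 1
  ext x
  rw [Finset.mem_filter_univ, Set.mem_toFinset, mem_rootSet]
  constructor
  · rintro rfl
    exact ⟨hP.ne_zero, minpoly.aeval F x⟩
  · exact fun hx => (minpoly.eq_of_irreducible_of_monic hirr hx.2 hP).symm

lemma primePowerSum_finrank_eq_sum {R : Type*} [CommRing R] (w : F[X] → R) :
    primePowerSum w (Module.finrank F L) =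
      ∑ x : L, w (minpoly F x) ^ Module.finrank F⟮x⟯ L := by
  classical
  have hdeg : ∀ x : L,
      Module.finrank F⟮x⟯ L * (minpoly F x).natDegree = Module.finrank F L := fun x => by
    rw [← adjoin.finrank (.of_finite F x), mul_comm, Module.finrank_mul_finrank]
  have hmaps : ∀ x ∈ (Finset.univ : Finset L),
      (minpoly F x, Module.finrank F⟮x⟯ L) ∈ primePowers F (Module.finrank F L) := fun x _ =>
    mem_primePowers.2 ⟨minpoly.monic (.of_finite F x), minpoly.irreducible (.of_finite F x),
      Module.finrank_pos, hdeg x⟩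
  rw [← Finset.sum_fiberwise_of_maps_to hmaps, primePowerSum]
  refine Finset.sum_congr rfl fun p hp => ?_
  obtain ⟨hmonic, hirr, -, hp⟩ := mem_primePowers.1 hp
  have hfibre : (Finset.univ.filter fun x : L => (minpoly F x, Module.finrank F⟮x⟯ L) = p) =
      Finset.univ.filter fun x : L => minpoly F x = p.1 := by
    refine Finset.filter_congr fun x _ => ⟨fun h => h ▸ rfl, fun h => Prod.ext h ?_⟩
    exact Nat.eq_of_mul_eq_mul_right hirr.natDegree_pos (hp ▸ h ▸ hdeg x)
  rw [← card_minpoly_eq (L := L) hmonic hirr (Dvd.intro_left _ hp), ← hfibre, ← nsmul_eq_mul,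
    ← Finset.sum_const]
  exact Finset.sum_congr rfl fun x hx => by rw [← (Finset.mem_filter.1 hx).2]

end MinpolyFibres

section Resultant

lemma norm_aeval_gen_eq_resultant {K S : Type*} [Field K] [Field S] [Algebra K S]
    [Algebra.IsSeparable K S] (pb : PowerBasis K S) (g : K[X]) :
    Algebra.norm K (aeval pb.gen g) = resultant (minpoly K pb.gen) g := by
  classical
  have := pb.finite
  set Ω := AlgebraicClosure K
  have hsplits : ((minpoly K pb.gen).map (algebraMap K Ω)).Splits := IsAlgClosed.splits _
  have hmonic := minpoly.monic pb.isIntegral_gen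
  have hnodup : ((minpoly K pb.gen).aroots Ω).Nodup :=
    nodup_roots (.map (Algebra.IsSeparable.isSeparable K pb.gen))
  apply (algebraMap K Ω).injective
  rw [Algebra.norm_eq_prod_embeddings, ← resultant_map_map,
    ← hmonic.natDegree_map (algebraMap K Ω), resultant_eq_prod_eval _ _ _ natDegree_map_le hsplits,
    (hmonic.map _).leadingCoeff, one_pow, one_mul,
    Fintype.prod_equiv pb.liftEquiv' _ fun y => aeval y.1 g]
  · rw [Finset.prod_mem_multiset _ _ fun y => aeval y g, Finset.prod_eq_multiset_prod,
      Multiset.toFinset_val, Multiset.dedup_eq_self.2 hnodup]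
    · simp only [aroots, eval_map_algebraMap]
    · exact fun _ => rfl
  · exact fun σ => by rw [PowerBasis.liftEquiv'_apply_coe, aeval_algHom_apply]

lemma norm_aeval_eq_resultant_pow {K L : Type*} [Field K] [Field L] [Algebra K L]
    [FiniteDimensional K L] [Algebra.IsSeparable K L] (x : L) (g : K[X]) :
    Algebra.norm K (aeval x g) = resultant (minpoly K x) g ^ Module.finrank K⟮x⟯ L := by
  have hint : IsIntegral K x := .of_finite K x
  have hgen : algebraMap K⟮x⟯ L (aeval (AdjoinSimple.gen K x) g) = aeval x g := by
    rw [← aeval_algebraMap_apply, AdjoinSimple.algebraMap_gen]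
  have hresultant := norm_aeval_gen_eq_resultant (adjoin.powerBasis hint) g
  rw [adjoin.powerBasis_gen, minpoly_gen] at hresultant
  rw [← hgen, ← Algebra.norm_norm (S := K⟮x⟯), Algebra.norm_algebraMap, map_pow, hresultant]

variable {F : Type*} [Field F]

lemma resultant_X_right (f : F[X]) : resultant f X = (-1) ^ f.natDegree * f.eval 0 := by
  rw [natDegree_X, ← resultant_X_sub_C_right f f.natDegree 0 le_rfl, C_0, sub_zero]

lemma algebraMap_resultant_sq_add_one {Ω : Type*} [Field Ω] [Algebra F Ω] {i : Ω}
    (hi : i ^ 2 = -1) (f : F[X]) :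
    algebraMap F Ω (resultant f (X ^ 2 + 1)) = aeval i f * aeval (-i) f := by
  have hfactor : (X ^ 2 + 1 : F[X]).map (algebraMap F Ω) = (X - C i) * (X + C i) := by
    have := congrArg C hi
    simp only [Polynomial.map_add, Polynomial.map_pow, map_X, Polynomial.map_one, C_pow, C_neg,
      C_1] at this ⊢
    linear_combination this
  have hdeg : (X ^ 2 + 1 : F[X]).natDegree = (X - C i).natDegree + (X + C i).natDegree := by
    rw [natDegree_sq_add_one, natDegree_X, natDegree_X_sub_C, natDegree_X_add_C]
  have hsign : ((-1 : Ω) ^ f.natDegree) * (-1) ^ f.natDegree = 1 := by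
    rw [← mul_pow, neg_one_mul, neg_neg, one_pow]
  rw [← resultant_map_map, hfactor, hdeg, resultant_mul_right _ _ _ _ natDegree_map_le,
    natDegree_X_sub_C, natDegree_X_add_C, resultant_X_sub_C_right _ _ _ natDegree_map_le,
    resultant_X_add_C_right _ _ _ natDegree_map_le, eval_map_algebraMap, eval_map_algebraMap]
  linear_combination aeval i f * aeval (-i) f * hsign

lemma exists_sq_eq_neg_one_algebraicClosure (F : Type*) [Field F] :
    ∃ i : AlgebraicClosure F, i ^ 2 = -1 :=
  IsAlgClosed.exists_pow_nat_eq (-1) two_pos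

lemma resultant_mul_sq_add_one (f g : F[X]) :
    resultant (f * g) (X ^ 2 + 1) = resultant f (X ^ 2 + 1) * resultant g (X ^ 2 + 1) := by
  obtain ⟨i, hi⟩ := exists_sq_eq_neg_one_algebraicClosure F
  apply (algebraMap F (AlgebraicClosure F)).injective
  simp only [map_mul, algebraMap_resultant_sq_add_one hi]
  ring

lemma resultant_sq_add_one_congr {f g : F[X]} (h : X ^ 2 + 1 ∣ f - g) :
    resultant f (X ^ 2 + 1) = resultant g (X ^ 2 + 1) := by
  obtain ⟨i, hi⟩ := exists_sq_eq_neg_one_algebraicClosure F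
  obtain ⟨r, hr⟩ := h
  have haeval : ∀ j : AlgebraicClosure F, j ^ 2 = -1 → aeval j f = aeval j g := fun j hj => by
    simp [sub_eq_iff_eq_add.1 hr, hj]
  apply (algebraMap F (AlgebraicClosure F)).injective
  rw [algebraMap_resultant_sq_add_one hi, algebraMap_resultant_sq_add_one hi, haeval i hi,
    haeval (-i) (by rw [neg_sq, hi])]

lemma resultant_linear_sq_add_one (a b : F) :
    resultant (C a + C b * X) (X ^ 2 + 1) = a ^ 2 + b ^ 2 := by
  obtain ⟨i, hi⟩ := exists_sq_eq_neg_one_algebraicClosure F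
  apply (algebraMap F (AlgebraicClosure F)).injective
  rw [algebraMap_resultant_sq_add_one hi]
  simp only [map_add, map_mul, map_pow, aeval_C, aeval_X]
  linear_combination -(algebraMap F (AlgebraicClosure F) b) ^ 2 * hi

lemma resultant_sq_add_one_of_two_eq_zero (h2 : (2 : F) = 0) (f : F[X]) :
    resultant f (X ^ 2 + 1) = f.eval 1 ^ 2 := by
  have hneg : (-1 : F) = 1 := by linear_combination -h2
  have := algebraMap_resultant_sq_add_one (Ω := F) (i := 1) (by rw [hneg, one_pow]) f
  rwa [hneg, ← sq] at this

lemma isCoprime_sq_add_one_of_resultant_ne_zero {f : F[X]}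
    (hf : resultant f (X ^ 2 + 1) ≠ 0) : IsCoprime f (X ^ 2 + 1) := by
  by_contra h
  exact hf (resultant_eq_zero_iff.2 ⟨.inr (monic_X_pow_add_C 1 two_ne_zero).ne_zero, h⟩)

end Resultant

/-! ### Vanishing of the coefficients and the Weil bound -/

lemma sum_eq_zero_of_injOn_of_eq_mul {ι R : Type*} [CommRing R] [NoZeroDivisors R] {s : Finset ι}
    {w : ι → R} {σ : ι → ι} {c : R} (hmaps : ∀ a ∈ s, σ a ∈ s) (hinj : Set.InjOn σ s)
    (hσ : ∀ a ∈ s, w (σ a) = c * w a) (hc : c ≠ 1) : ∑ a ∈ s, w a = 0 := by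
  have hreindex : ∑ a ∈ s, w (σ a) = ∑ a ∈ s, w a :=
    Finset.sum_nbij σ hmaps hinj (Finset.surjOn_of_injOn_of_card_le σ hmaps hinj le_rfl)
      fun _ _ => rfl
  rw [Finset.sum_congr rfl hσ, ← Finset.mul_sum] at hreindex
  exact (mul_eq_zero.1 (by rw [sub_mul, hreindex, one_mul, sub_self] :
    (c - 1) * ∑ a ∈ s, w a = 0)).resolve_left (sub_ne_zero.2 hc)

section Vanishing

variable {F R : Type*} [Field F]

lemma add_mem_monicOfDegree [Finite F] {n : ℕ} {f g : F[X]} (hf : f ∈ monicOfDegree F n)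
    (hg : g.degree < n) : f + g ∈ monicOfDegree F n := by
  obtain ⟨hmonic, rfl⟩ := mem_monicOfDegree.1 hf
  rw [← degree_eq_natDegree hmonic.ne_zero] at hg
  exact mem_monicOfDegree.2 ⟨hmonic.add_of_left hg, natDegree_add_eq_left_of_degree_lt hg⟩

lemma coeffSum_eq_zero_of_periodic_of_map_mul [Finite F] [CommRing R] [NoZeroDivisors R]
    {w : F[X] → R} {m u : F[X]} (hm : m.Monic) (hu : IsCoprime u m)
    (hperiodic : ∀ f g, m ∣ f - g → w f = w g) {c : R} (hmul : ∀ f, w (u * f) = c * w f)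
    (hc : c ≠ 1) {n : ℕ} (hn : m.natDegree ≤ n) : coeffSum w n = 0 := by
  set σ : F[X] → F[X] := fun f => f + ((u - 1) * f) %ₘ m with hσ
  have hcongr : ∀ f, m ∣ σ f - u * f := fun f =>
    ⟨-(((u - 1) * f) /ₘ m), by linear_combination modByMonic_add_div ((u - 1) * f) m⟩
  refine sum_eq_zero_of_injOn_of_eq_mul (σ := σ) (fun f hf => add_mem_monicOfDegree hf ?_)
    (fun f _ g _ hfg => ?_) (fun f _ => (hperiodic _ _ (hcongr f)).trans (hmul f)) hc
  · calc (((u - 1) * f) %ₘ m).degree < m.degree := degree_modByMonic_lt _ hm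
      _ ≤ n := degree_le_of_natDegree_le hn
  · have hdvd : m ∣ u * (f - g) := by
      convert dvd_sub (hcongr g) (hcongr f) using 1
      rw [hfg]
      ring
    have hmod : ((u - 1) * f) %ₘ m = ((u - 1) * g) %ₘ m := by
      refine modByMonic_eq_of_dvd_sub hm ?_
      rw [← mul_sub]
      exact (hu.symm.dvd_of_dvd_mul_left hdvd).mul_left _
    simpa only [hσ, hmod, add_left_inj] using hfg

lemma exists_monic_natDegree_eq_resultant_congr {M : ℕ} (hM : M = 3 ∨ M = 2 ∧ (2 : F) = 0) :
    ∃ m : F[X], m.Monic ∧ m.natDegree = M ∧ X ∣ m ∧ m ∣ X * (X ^ 2 + 1) ∧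
      ∀ f g : F[X], m ∣ f - g → resultant f (X ^ 2 + 1) = resultant g (X ^ 2 + 1) := by
  rcases hM with rfl | ⟨rfl, h2⟩
  · exact ⟨X * (X ^ 2 + 1), by monicity!, by compute_degree!, dvd_mul_right _ _, dvd_rfl,
      fun f g h => resultant_sq_add_one_congr ((dvd_mul_left _ _).trans h)⟩
  · have hC2 : (2 : F[X]) = 0 := by rw [← C_ofNat, h2, C_0]
    refine ⟨X * (X + 1), by monicity!, by compute_degree!, dvd_mul_right _ _,
      ⟨X + 1, by linear_combination -X ^ 2 * hC2⟩, fun f g ⟨r, hr⟩ => ?_⟩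
    have heval : f.eval 1 = g.eval 1 := by
      rw [sub_eq_iff_eq_add.1 hr]
      simp [one_add_one_eq_two, h2]
    rw [resultant_sq_add_one_of_two_eq_zero h2, resultant_sq_add_one_of_two_eq_zero h2, heval]

lemma eval_zero_congr {m f g : F[X]} (hX : X ∣ m) (h : m ∣ f - g) : f.eval 0 = g.eval 0 := by
  obtain ⟨r, hr⟩ := hX.trans h
  rw [sub_eq_iff_eq_add.1 hr]
  simp

lemma exists_sq_add_sq [Finite F] (t : F) : ∃ a b : F, a ^ 2 + b ^ 2 = t := by
  have := Fintype.ofFinite F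
  by_cases hchar : ringChar F = 2
  · obtain ⟨a, ha⟩ := FiniteField.isSquare_of_char_two hchar t
    exact ⟨a, 0, by rw [ha]; ring⟩
  · obtain ⟨a, b, hab⟩ := FiniteField.exists_root_sum_quadratic (degree_X_pow 2)
      (degree_X_pow_sub_C two_pos t) (FiniteField.odd_card_of_char_ne_two hchar)
    refine ⟨a, b, sub_eq_zero.1 ?_⟩
    simpa only [eval_pow, eval_X, eval_sub, eval_C, add_sub_assoc] using hab

lemma exists_eval_zero_eq_and_resultant_eq [Finite F] (v t : F) :
    ∃ u : F[X], u.eval 0 = v ∧ resultant u (X ^ 2 + 1) = t := by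
  obtain ⟨a, b, hab⟩ := exists_sq_add_sq t
  -- `X ^ 2 + 1` and `-X ^ 2` are the idempotents of the Chinese remainder theorem.
  refine ⟨C v * (X ^ 2 + 1) - X ^ 2 * (C a + C b * X), by simp, ?_⟩
  rw [← hab, ← resultant_linear_sq_add_one]
  exact resultant_sq_add_one_congr ⟨C v - (C a + C b * X), by ring⟩

lemma isCoprime_X_mul_sq_add_one {u : F[X]} (h0 : u.eval 0 ≠ 0)
    (hres : resultant u (X ^ 2 + 1) ≠ 0) : IsCoprime u (X * (X ^ 2 + 1)) := by
  refine .mul_right ?_ (isCoprime_sq_add_one_of_resultant_ne_zero hres)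
  rw [isCoprime_comm, irreducible_X.coprime_iff_not_dvd, X_dvd_iff, coeff_zero_eq_eval_zero]
  exact h0

lemma exists_map_mul_map_ne_one {χ₁ χ₂ : MulChar F ℂ} (hne : ¬ (χ₁ = 1 ∧ χ₂ = 1)) :
    ∃ v t : Fˣ, χ₁ v * χ₂ t ≠ 1 := by
  by_cases h₁ : χ₁ = 1
  · obtain ⟨t, ht⟩ := MulChar.ne_one_iff.1 fun h₂ => hne ⟨h₁, h₂⟩
    exact ⟨1, t, by rwa [Units.val_one, map_one, one_mul]⟩
  · obtain ⟨v, hv⟩ := MulChar.ne_one_iff.1 h₁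
    exact ⟨v, 1, by rwa [Units.val_one, map_one, mul_one]⟩

/-- The weight on monic polynomials whose `L`-function encodes the sums `mixedSum` over all
extensions of `F`: if `f = ∏ (X - xᵢ)` it is `χ₁ (∏ xᵢ) * χ₂ (∏ (xᵢ ^ 2 + 1)) * ψ (∑ xᵢ)`. -/
noncomputable def mixedWeight (χ₁ χ₂ : MulChar F ℂ) (ψ : AddChar F ℂ) (f : F[X]) : ℂ :=
  χ₁ (resultant f X) * χ₂ (resultant f (X ^ 2 + 1)) * ψ (-f.nextCoeff)

variable {χ₁ χ₂ : MulChar F ℂ} {ψ : AddChar F ℂ}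

lemma isMonicMultiplicative_mixedWeight : IsMonicMultiplicative (mixedWeight χ₁ χ₂ ψ) where
  map_one := by simp [mixedWeight, nextCoeff]
  map_mul {f g} hf hg := by
    have hX : resultant (f * g) X = resultant f X * resultant g X := by
      rw [resultant_X_right, resultant_X_right, resultant_X_right, hf.natDegree_mul hg, eval_mul,
        pow_add, mul_mul_mul_comm]
    simp only [mixedWeight, hX, resultant_mul_sq_add_one, hf.nextCoeff_mul hg, neg_add, map_mul,
      AddChar.map_add_eq_mul]
    ring

lemma primePowerSum_mixedWeight_finrank [Finite F] (L : Type*) [Field L] [Fintype L]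
    [Algebra F L] :
    primePowerSum (mixedWeight χ₁ χ₂ ψ) (Module.finrank F L) =
      mixedSum (normLift L χ₁) (normLift L χ₂) (traceLift L ψ) := by
  rw [primePowerSum_finrank_eq_sum, mixedSum]
  refine Finset.sum_congr rfl fun x _ => ?_
  have hX := norm_aeval_eq_resultant_pow (K := F) x X
  have hQ := norm_aeval_eq_resultant_pow (K := F) x (X ^ 2 + 1)
  simp only [map_add, map_pow, aeval_X, map_one] at hX hQ
  rw [normLift_apply, normLift_apply, traceLift_apply, hX, hQ,
    trace_eq_finrank_mul_minpoly_nextCoeff, ← nsmul_eq_mul, AddChar.map_nsmul_eq_pow, map_pow,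
    map_pow, ← mul_pow, ← mul_pow, mixedWeight]

lemma coeffSum_mixedWeight_one_eq_zero [Finite F] (hne : ¬ (χ₁ = 1 ∧ χ₂ = 1)) {M n : ℕ}
    (hM : M = 3 ∨ M = 2 ∧ (2 : F) = 0) (hn : M ≤ n) : coeffSum (mixedWeight χ₁ χ₂ 1) n = 0 := by
  obtain ⟨m, hm, rfl, hX, hdvd, hcongr⟩ := exists_monic_natDegree_eq_resultant_congr hM
  obtain ⟨v, t, hvt⟩ := exists_map_mul_map_ne_one hne
  obtain ⟨u, hv, ht⟩ := exists_eval_zero_eq_and_resultant_eq (v : F) t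
  set w : F[X] → ℂ := fun f => χ₁ (f.eval 0) * χ₂ (resultant f (X ^ 2 + 1)) with hw
  have hcoprime : IsCoprime u m :=
    (isCoprime_X_mul_sq_add_one (hv ▸ v.ne_zero) (ht ▸ t.ne_zero)).of_isCoprime_of_dvd_right hdvd
  have hvanish : coeffSum w n = 0 := by
    refine coeffSum_eq_zero_of_periodic_of_map_mul hm hcoprime (fun f g h => ?_) (fun f => ?_) hvt
      hn
    · simp only [hw, eval_zero_congr hX h, hcongr f g h]
    · simp only [hw, eval_mul, resultant_mul_sq_add_one, hv, ht, map_mul]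
      ring
  calc coeffSum (mixedWeight χ₁ χ₂ 1) n = χ₁ ((-1) ^ n) * coeffSum w n := by
        rw [coeffSum, coeffSum, Finset.mul_sum]
        refine Finset.sum_congr rfl fun f hf => ?_
        obtain ⟨-, rfl⟩ := mem_monicOfDegree.1 hf
        rw [mixedWeight, resultant_X_right, map_mul, AddChar.one_apply, mul_one, mul_assoc]
    _ = 0 := by rw [hvanish, mul_zero]

lemma coeffSum_mixedWeight_eq_zero_of_addChar_ne_one [Finite F] (hψ : ψ ≠ 1) {M n : ℕ}
    (hM : M = 3 ∨ M = 2 ∧ (2 : F) = 0) (hn : M < n) : coeffSum (mixedWeight χ₁ χ₂ ψ) n = 0 := by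
  obtain ⟨m, hm, rfl, hX, -, hcongr⟩ := exists_monic_natDegree_eq_resultant_congr hM
  obtain ⟨s, hs⟩ := AddChar.ne_one_iff.1 hψ
  set h : F[X] := C (-s) * X ^ (n - 1 - m.natDegree) * m with hh
  have hdvd : ∀ f : F[X], m ∣ f + h - f := fun f => by
    rw [add_sub_cancel_left]
    exact dvd_mul_left _ _
  have hdeg : h.degree < n := by
    have : h.natDegree ≤ n - 1 := natDegree_mul_le.trans (by
      have := natDegree_C_mul_X_pow_le (-s) (n - 1 - m.natDegree)
      omega)
    exact (degree_le_of_natDegree_le this).trans_lt (by exact_mod_cast (by omega : n - 1 < n))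
  have hcoeff : h.coeff (n - 1) = -s := by
    rw [hh, mul_assoc, coeff_C_mul, show n - 1 = m.natDegree + (n - 1 - m.natDegree) by omega,
      Nat.add_sub_cancel_left, coeff_X_pow_mul, hm.coeff_natDegree, mul_one]
  refine sum_eq_zero_of_injOn_of_eq_mul (σ := (· + h)) (fun f hf => add_mem_monicOfDegree hf hdeg)
    (add_left_injective h).injOn (fun f hf => ?_) hs
  have hf' := (mem_monicOfDegree.1 (add_mem_monicOfDegree hf hdeg)).2
  have hf := (mem_monicOfDegree.1 hf).2
  rw [mixedWeight, mixedWeight, hcongr _ _ (hdvd f), resultant_X_right, resultant_X_right, hf', hf,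
    eval_zero_congr hX (hdvd f), nextCoeff_of_natDegree_pos (by omega : 0 < (f + h).natDegree),
    nextCoeff_of_natDegree_pos (by omega : 0 < f.natDegree), hf', hf, coeff_add, hcoeff, neg_add,
    neg_neg, AddChar.map_add_eq_mul]
  ring

lemma coeffSum_mixedWeight_eq_zero [Finite F] (hne : ¬ (χ₁ = 1 ∧ χ₂ = 1 ∧ ψ = 1)) {M n : ℕ}
    (hM : M = 3 ∨ M = 2 ∧ (2 : F) = 0) (hn : M < n) : coeffSum (mixedWeight χ₁ χ₂ ψ) n = 0 := by
  by_cases hψ : ψ = 1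
  · subst hψ
    exact coeffSum_mixedWeight_one_eq_zero (fun h => hne ⟨h.1, h.2, rfl⟩) hM hn.le
  · exact coeffSum_mixedWeight_eq_zero_of_addChar_ne_one hψ hM hn

end Vanishing

section Weil

variable {F : Type*} [Field F] [Fintype F] {χ₁ χ₂ : MulChar F ℂ} {ψ : AddChar F ℂ}

lemma primePowerSum_mixedWeight_one :
    primePowerSum (mixedWeight χ₁ χ₂ ψ) 1 = mixedSum χ₁ χ₂ ψ := by
  have h := primePowerSum_mixedWeight_finrank (χ₁ := χ₁) (χ₂ := χ₂) (ψ := ψ) F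
  rw [Module.finrank_self] at h
  simpa only [mixedSum, normLift_apply, traceLift_apply, Algebra.norm_self, MonoidHom.id_apply,
    Algebra.trace_self_apply] using h

lemma exists_norm_primePowerSum_mixedWeight_le (hne : ¬ (χ₁ = 1 ∧ χ₂ = 1 ∧ ψ = 1)) :
    ∃ K : ℝ, ∀ m : ℕ, 0 < m →
      ‖primePowerSum (mixedWeight χ₁ χ₂ ψ) (2 * m)‖ ≤ K * (Fintype.card F : ℝ) ^ m := by
  obtain ⟨K, hK⟩ := exists_norm_mixedSum_lift_le_of_ne_one hne
  refine ⟨K, fun m hm => ?_⟩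
  obtain ⟨p, _⟩ := CharP.exists F
  have : Fact p.Prime := ⟨CharP.char_is_prime F p⟩
  have : NeZero (2 * m) := ⟨by omega⟩
  let L := FiniteField.Extension F p (2 * m)
  let : Fintype L := Fintype.ofFinite _
  have hcard : Fintype.card L = (Fintype.card F ^ m) ^ 2 := by
    rw [← Nat.card_eq_fintype_card, ← Nat.card_eq_fintype_card, FiniteField.natCard_extension,
      ← pow_mul, mul_comm]
  rw [← FiniteField.finrank_extension F p (2 * m), primePowerSum_mixedWeight_finrank]
  exact hK L m hcard

theorem norm_mixedSum_le (hne : ¬ (χ₁ = 1 ∧ χ₂ = 1 ∧ ψ = 1)) {M : ℕ}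
    (hM : M = 3 ∨ M = 2 ∧ (2 : F) = 0) :
    ‖mixedSum χ₁ χ₂ ψ‖ ≤ M * √(Fintype.card F : ℝ) := by
  obtain ⟨α, hα⟩ := exists_primePowerSum_eq_neg_sum_pow isMonicMultiplicative_mixedWeight
    fun n => coeffSum_mixedWeight_eq_zero (χ₁ := χ₁) (χ₂ := χ₂) (ψ := ψ) hne hM
  obtain ⟨K, hK⟩ := exists_norm_primePowerSum_mixedWeight_le hne
  have hpos : (0 : ℝ) < Fintype.card F := by exact_mod_cast Fintype.card_pos
  have hbound := norm_sum_le_card_mul_of_norm_sum_pow_le (α := α) (Real.sqrt_pos.2 hpos)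
    fun m hm => by
      rw [Real.sq_sqrt hpos.le, ← norm_neg, ← hα (2 * m) (by omega)]
      exact hK m hm
  rw [← primePowerSum_mixedWeight_one, hα 1 one_pos, norm_neg]
  simpa only [pow_one, Fintype.card_fin] using hbound

end Weil

/-! ### A weighted sieve for characters -/

section WeightedSieve

variable {ι α : Type*} {Z : Finset α} {I₁ I₂ : Finset ι} {f : ι → α → ℝ} {θ : ι → ℝ} {D δ : ℝ}

lemma sum_mul_le_card_sub_one {x : ι} {u : ι → ℝ} (hx : x ∈ I₂) (hu : u x = 0)
    (hle : ∀ i ∈ I₂, θ i * u i ≤ 1) : ∑ i ∈ I₂, θ i * u i ≤ I₂.card - 1 := by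
  classical
  rw [← Finset.add_sum_erase _ _ hx, hu, mul_zero, zero_add]
  calc ∑ i ∈ I₂.erase x, θ i * u i ≤ ∑ _i ∈ I₂.erase x, (1 : ℝ) :=
        Finset.sum_le_sum fun i hi => hle i (Finset.mem_of_mem_erase hi)
    _ = I₂.card - 1 := by
        rw [Finset.sum_const, nsmul_eq_mul, mul_one, Finset.card_erase_of_mem hx,
          Nat.cast_sub (Finset.card_pos.2 ⟨x, hx⟩), Nat.cast_one]

lemma exists_forall_ne_zero_of_sieve [DecidableEq ι] (hf : ∀ i ∈ I₁, ∀ ξ ∈ Z, 0 ≤ f i ξ)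
    (hθ : ∀ i ∈ I₂, 0 ≤ θ i) (hθf : ∀ i ∈ I₂, ∀ ξ ∈ Z, θ i * f i ξ ≤ 1) (hδ : 0 < δ)
    (hδθ : ∑ i ∈ I₂, θ i = I₂.card - 1 + δ)
    (hD : ∀ i ∈ I₂, ∑ ξ ∈ Z, ∏ j ∈ I₁, f j ξ - D ≤ ∑ ξ ∈ Z, f i ξ * ∏ j ∈ I₁, f j ξ)
    (hlt : D * (1 + (I₂.card - 1) / δ) < ∑ ξ ∈ Z, ∏ j ∈ I₁, f j ξ) :
    ∃ ξ ∈ Z, ∀ i ∈ I₁ ∪ I₂, f i ξ ≠ 0 := by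
  by_contra! hno
  set W := ∑ ξ ∈ Z, ∏ j ∈ I₁, f j ξ with hW
  have hupper : ∑ i ∈ I₂, θ i * ∑ ξ ∈ Z, f i ξ * ∏ j ∈ I₁, f j ξ ≤ (I₂.card - 1) * W := by
    simp only [Finset.mul_sum, hW]
    rw [Finset.sum_comm]
    refine Finset.sum_le_sum fun ξ hξ => ?_
    simp only [← mul_assoc, ← Finset.sum_mul]
    by_cases hprod : ∏ j ∈ I₁, f j ξ = 0
    · rw [hprod, mul_zero, mul_zero]
    obtain ⟨i, hi, hzero⟩ := hno ξ hξ
    have hi₂ : i ∈ I₂ := (Finset.mem_union.1 hi).resolve_left fun hi₁ =>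
      Finset.prod_ne_zero_iff.1 hprod i hi₁ hzero
    exact mul_le_mul_of_nonneg_right (sum_mul_le_card_sub_one (u := fun i => f i ξ) hi₂ hzero
      fun i hi => hθf i hi ξ hξ) (Finset.prod_nonneg fun j hj => hf j hj ξ hξ)
  have hlower : (I₂.card - 1 + δ) * (W - D) ≤
      ∑ i ∈ I₂, θ i * ∑ ξ ∈ Z, f i ξ * ∏ j ∈ I₁, f j ξ := by
    rw [← hδθ, Finset.sum_mul]
    exact Finset.sum_le_sum fun i hi => mul_le_mul_of_nonneg_left (hD i hi) (hθ i hi)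
  have hscaled : δ * (D * (1 + (I₂.card - 1) / δ)) = (I₂.card - 1 + δ) * D := by
    field_simp
    ring
  linarith [mul_lt_mul_of_pos_left hlt hδ, hupper, hlower]

end WeightedSieve

section FreeWeight

variable {H : Type*} [CommGroup H]

open Classical in
/-- The indicator of `φ g ≠ 1`, normalised so that its average over the characters `φ` of a finite
group is `1`. -/
noncomputable def freeWeight (φ : H →* ℂ) (g : H) : ℝ :=
  if φ g = 1 then 0 else orderOf g / (orderOf g - 1)

lemma freeWeight_ne_zero_imp {φ : H →* ℂ} {g : H} (h : freeWeight φ g ≠ 0) : φ g ≠ 1 := fun h1 =>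
  h (if_pos h1)

lemma freeWeight_nonneg (φ : H →* ℂ) {g : H} (hg : 1 < orderOf g) : 0 ≤ freeWeight φ g := by
  have : (1 : ℝ) < orderOf g := by exact_mod_cast hg
  unfold freeWeight
  split_ifs
  · exact le_rfl
  · exact div_nonneg (by linarith) (by linarith)

lemma one_sub_inv_mul_freeWeight_le_one (φ : H →* ℂ) {g : H} (hg : 1 < orderOf g) :
    (1 - 1 / (orderOf g : ℝ)) * freeWeight φ g ≤ 1 := by
  have hlt : (1 : ℝ) < orderOf g := by exact_mod_cast hg
  unfold freeWeight
  split_ifs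
  · rw [mul_zero]
    exact zero_le_one
  · have h0 : (orderOf g : ℝ) ≠ 0 := by linarith
    have h1 : (orderOf g : ℝ) - 1 ≠ 0 := by linarith
    exact le_of_eq (by field_simp)

lemma freeWeight_eq_one_sub_sum (φ : H →* ℂ) {g : H} (hg : 1 < orderOf g) :
    (freeWeight φ g : ℂ) =
      1 - (∑ j ∈ Finset.Ico 1 (orderOf g), φ (g ^ j)) / ((orderOf g : ℂ) - 1) := by
  have hsub : (orderOf g : ℂ) - 1 ≠ 0 := sub_ne_zero.2 (by exact_mod_cast hg.ne')
  have hsplit : ∑ j ∈ Finset.Ico 1 (orderOf g), φ (g ^ j) =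
      ∑ j ∈ Finset.range (orderOf g), φ g ^ j - 1 := by
    rw [Finset.range_eq_Ico, Finset.sum_eq_sum_Ico_succ_bot (by omega) fun j => φ g ^ j, pow_zero,
      add_sub_cancel_left]
    simp only [map_pow, zero_add]
  rw [hsplit, freeWeight]
  split_ifs with h
  · simp only [h, one_pow, Finset.sum_const, Finset.card_range, nsmul_eq_mul, mul_one,
      Complex.ofReal_zero, div_self hsub, sub_self]
  · rw [geom_sum_eq h, ← map_pow, pow_orderOf_eq_one, map_one, sub_self, zero_div]
    push_cast
    field_simp
    ring

variable {ι α : Type*} {Z : Finset α} {ev : α → H →* ℂ} {h : ι → H} {B : ℝ}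
  {I : Finset ι}

/-- The sum over `Z` of the product of the weights attached to `I`, twisted by evaluation at
`g`. -/
noncomputable def twistedWeightSum (Z : Finset α) (ev : α → H →* ℂ) (h : ι → H) (I : Finset ι)
    (g : H) : ℂ :=
  ∑ ξ ∈ Z, ev ξ g * ∏ i ∈ I, (freeWeight (ev ξ) (h i) : ℂ)

lemma twistedWeightSum_one :
    twistedWeightSum Z ev h I 1 = ((∑ ξ ∈ Z, ∏ i ∈ I, freeWeight (ev ξ) (h i) : ℝ) : ℂ) := by
  simp only [twistedWeightSum, map_one, one_mul]
  push_cast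
  rfl

lemma twistedWeightSum_insert [DecidableEq ι] {x : ι} (hx : x ∉ I) (hord : 1 < orderOf (h x))
    (g : H) :
    twistedWeightSum Z ev h (insert x I) g = twistedWeightSum Z ev h I g -
      (∑ j ∈ Finset.Ico 1 (orderOf (h x)), twistedWeightSum Z ev h I (g * h x ^ j)) /
        ((orderOf (h x) : ℂ) - 1) := by
  simp only [twistedWeightSum]
  rw [Finset.sum_comm, Finset.sum_div, ← Finset.sum_sub_distrib]
  refine Finset.sum_congr rfl fun ξ _ => ?_
  rw [Finset.prod_insert hx, freeWeight_eq_one_sub_sum _ hord, ← Finset.sum_mul]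
  simp only [map_mul, ← Finset.mul_sum]
  ring

lemma norm_twistedWeightSum_insert_sub_le [DecidableEq ι] {x : ι} (hx : x ∉ I)
    (hord : 1 < orderOf (h x)) {g : H} {K : ℝ} (hK : ∀ j ∈ Finset.Ico 1 (orderOf (h x)),
      ‖twistedWeightSum Z ev h I (g * h x ^ j)‖ ≤ K) :
    ‖twistedWeightSum Z ev h (insert x I) g - twistedWeightSum Z ev h I g‖ ≤ K := by
  have hsub : ((orderOf (h x) : ℂ) - 1) = ((orderOf (h x) - 1 : ℕ) : ℂ) := by
    rw [Nat.cast_sub hord.le, Nat.cast_one]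
  have hpos : (0 : ℝ) < (orderOf (h x) - 1 : ℕ) := by exact_mod_cast Nat.sub_pos_of_lt hord
  rw [twistedWeightSum_insert hx hord, sub_sub_cancel_left, norm_neg, norm_div, hsub,
    Complex.norm_natCast, div_le_iff₀ hpos]
  calc _ ≤ ∑ _j ∈ Finset.Ico 1 (orderOf (h x)), K := norm_sum_le_of_le _ hK
    _ = _ := by rw [Finset.sum_const, Nat.card_Ico, nsmul_eq_mul, mul_comm]

lemma norm_twistedWeightSum_le (hB : ∀ g, g ≠ 1 → ‖∑ ξ ∈ Z, ev ξ g‖ ≤ B)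
    (hord : ∀ i ∈ I, 1 < orderOf (h i)) {g : H}
    (hg : g ∉ I.sup fun i => Subgroup.zpowers (h i)) :
    ‖twistedWeightSum Z ev h I g‖ ≤ B * 2 ^ I.card := by
  classical
  induction I using Finset.induction_on generalizing g with
  | empty =>
    simp only [twistedWeightSum, Finset.prod_empty, mul_one, Finset.card_empty, pow_zero]
    exact hB g fun h1 => hg (h1 ▸ one_mem _)
  | insert x I hx ih =>
    rw [Finset.sup_insert] at hg
    have hordI : ∀ i ∈ I, 1 < orderOf (h i) := fun i hi => hord i (Finset.mem_insert_of_mem hi)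
    have hI : ‖twistedWeightSum Z ev h I g‖ ≤ B * 2 ^ I.card :=
      ih hordI fun hmem => hg (Subgroup.mem_sup_right hmem)
    have hdiff : ‖twistedWeightSum Z ev h (insert x I) g - twistedWeightSum Z ev h I g‖ ≤
        B * 2 ^ I.card := by
      refine norm_twistedWeightSum_insert_sub_le hx (hord x (Finset.mem_insert_self x I))
        fun j _ => ih hordI fun hmem => hg ?_
      rw [← mul_inv_cancel_right g (h x ^ j)]
      exact mul_mem (Subgroup.mem_sup_right hmem)
        (inv_mem (Subgroup.mem_sup_left (Subgroup.npow_mem_zpowers (h x) j)))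
    rw [Finset.card_insert_of_notMem hx, pow_succ]
    linarith [norm_le_norm_add_norm_sub' (twistedWeightSum Z ev h (insert x I) g)
      (twistedWeightSum Z ev h I g)]

lemma abs_sum_prod_freeWeight_insert_sub_le [DecidableEq ι]
    (hB : ∀ g, g ≠ 1 → ‖∑ ξ ∈ Z, ev ξ g‖ ≤ B) {x : ι} (hx : x ∉ I)
    (hord : ∀ i ∈ insert x I, 1 < orderOf (h i))
    (hind : Disjoint (Subgroup.zpowers (h x)) (I.sup fun i => Subgroup.zpowers (h i))) :
    |∑ ξ ∈ Z, ∏ i ∈ insert x I, freeWeight (ev ξ) (h i) -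
      ∑ ξ ∈ Z, ∏ i ∈ I, freeWeight (ev ξ) (h i)| ≤ B * 2 ^ I.card := by
  rw [← Real.norm_eq_abs, ← Complex.norm_real, Complex.ofReal_sub, ← twistedWeightSum_one,
    ← twistedWeightSum_one]
  refine norm_twistedWeightSum_insert_sub_le hx (hord x (Finset.mem_insert_self x I))
    fun j hj => ?_
  obtain ⟨hj0, hjlt⟩ := Finset.mem_Ico.1 hj
  rw [one_mul]
  refine norm_twistedWeightSum_le hB (fun i hi => hord i (Finset.mem_insert_of_mem hi))
    fun hmem => pow_ne_one_of_lt_orderOf (by omega) hjlt ?_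
  exact Subgroup.disjoint_def.1 hind (Subgroup.npow_mem_zpowers (h x) j) hmem

lemma abs_sum_prod_freeWeight_sub_card_le (hB : ∀ g, g ≠ 1 → ‖∑ ξ ∈ Z, ev ξ g‖ ≤ B)
    (hord : ∀ i ∈ I, 1 < orderOf (h i)) (hind : I.SupIndep fun i => Subgroup.zpowers (h i)) :
    |∑ ξ ∈ Z, ∏ i ∈ I, freeWeight (ev ξ) (h i) - Z.card| ≤ B * (2 ^ I.card - 1) := by
  classical
  induction I using Finset.induction_on with
  | empty => simp
  | insert x I hx ih =>
    have hinsert := abs_sum_prod_freeWeight_insert_sub_le hB hx hord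
      (hind (Finset.subset_insert x I) (Finset.mem_insert_self x I) hx)
    have hI := ih (fun i hi => hord i (Finset.mem_insert_of_mem hi))
      (hind.subset (Finset.subset_insert x I))
    rw [Finset.card_insert_of_notMem hx, pow_succ]
    linarith [abs_sub_le (∑ ξ ∈ Z, ∏ i ∈ insert x I, freeWeight (ev ξ) (h i))
      (∑ ξ ∈ Z, ∏ i ∈ I, freeWeight (ev ξ) (h i)) Z.card]

theorem exists_forall_map_ne_one [DecidableEq ι]
    (hB : ∀ g, g ≠ 1 → ‖∑ ξ ∈ Z, ev ξ g‖ ≤ B) {I₁ I₂ : Finset ι}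
    (hdisj : Disjoint I₁ I₂) (hord : ∀ i ∈ I₁ ∪ I₂, 1 < orderOf (h i))
    (hind : (I₁ ∪ I₂).SupIndep fun i => Subgroup.zpowers (h i)) {δ : ℝ}
    (hδdef : δ = 1 - ∑ i ∈ I₂, 1 / (orderOf (h i) : ℝ)) (hδ : 0 < δ)
    (hlt : B * (2 ^ I₁.card * (2 + (I₂.card - 1) / δ) - 1) < Z.card) :
    ∃ ξ ∈ Z, ∀ i ∈ I₁ ∪ I₂, ev ξ (h i) ≠ 1 := by
  have hord₁ : ∀ i ∈ I₁, 1 < orderOf (h i) := fun i hi => hord i (Finset.mem_union_left _ hi)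
  have hord₂ : ∀ i ∈ I₂, 1 < orderOf (h i) := fun i hi => hord i (Finset.mem_union_right _ hi)
  have hmain := abs_sum_prod_freeWeight_sub_card_le hB hord₁
    (hind.subset Finset.subset_union_left)
  have hstep : ∀ x ∈ I₂, ∑ ξ ∈ Z, ∏ i ∈ I₁, freeWeight (ev ξ) (h i) - B * 2 ^ I₁.card ≤
      ∑ ξ ∈ Z, freeWeight (ev ξ) (h x) * ∏ i ∈ I₁, freeWeight (ev ξ) (h i) := fun x hx => by
    have hx₁ : x ∉ I₁ := fun hx₁ => Finset.disjoint_left.1 hdisj hx₁ hx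
    have hinsert := abs_sum_prod_freeWeight_insert_sub_le hB hx₁
      (Finset.forall_mem_insert .. |>.2 ⟨hord₂ x hx, hord₁⟩)
      (hind Finset.subset_union_left (Finset.mem_union_right _ hx) hx₁)
    simp only [Finset.prod_insert hx₁] at hinsert
    linarith [neg_le_of_abs_le hinsert]
  obtain ⟨ξ, hξ, hne⟩ := exists_forall_ne_zero_of_sieve (f := fun i ξ => freeWeight (ev ξ) (h i))
    (fun i hi ξ _ => freeWeight_nonneg (ev ξ) (hord₁ i hi))
    (fun i hi => sub_nonneg.2 (div_le_one_of_le₀ (by exact_mod_cast (hord₂ i hi).le)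
      (Nat.cast_nonneg _)))
    (fun i hi ξ _ => one_sub_inv_mul_freeWeight_le_one (ev ξ) (hord₂ i hi)) hδ
    (by rw [Finset.sum_sub_distrib, Finset.sum_const, nsmul_eq_mul, hδdef]; ring) hstep
    (by linarith [neg_le_of_abs_le hmain])
  exact ⟨ξ, hξ, fun i hi => freeWeight_ne_zero_imp (hne i hi)⟩

end FreeWeight

/-! ### Primitive pairs with prescribed trace -/

section Fibre

variable {F E : Type*} [Field F] [Field E] [Fintype E] [Algebra F E] [DecidableEq F]

lemma card_mul_sum_filter_trace_eq [Fintype F] (f : E → ℂ) (a : F) :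
    (Fintype.card F : ℂ) * ∑ ξ with Algebra.trace F E ξ = a, f ξ =
      ∑ ψ : AddChar F ℂ, ψ (-a) * ∑ ξ, f ξ * traceLift E ψ ξ := by
  simp only [Finset.mul_sum]
  rw [Finset.sum_comm, Finset.sum_filter]
  refine Finset.sum_congr rfl fun ξ _ => ?_
  have hterm : ∀ ψ : AddChar F ℂ, ψ (-a) * (f ξ * traceLift E ψ ξ) =
      f ξ * ψ (Algebra.trace F E ξ - a) := fun ψ => by
    rw [traceLift_apply, sub_eq_add_neg, AddChar.map_add_eq_mul]
    ring
  simp only [hterm]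
  rw [← Finset.mul_sum, AddChar.sum_apply_eq_ite]
  simp only [sub_eq_zero]
  split_ifs
  · exact mul_comm _ _
  · simp only [mul_zero]

lemma norm_sum_filter_trace_eq_le [Finite F] {f : E → ℂ} {B : ℝ}
    (hB : ∀ ψ : AddChar F ℂ, ‖∑ ξ, f ξ * traceLift E ψ ξ‖ ≤ B) (a : F) :
    ‖∑ ξ with Algebra.trace F E ξ = a, f ξ‖ ≤ B := by
  have := Fintype.ofFinite F
  have hpos : (0 : ℝ) < Fintype.card F := by exact_mod_cast Fintype.card_pos
  refine le_of_mul_le_mul_left ?_ hpos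
  calc (Fintype.card F : ℝ) * ‖∑ ξ with Algebra.trace F E ξ = a, f ξ‖
      = ‖∑ ψ : AddChar F ℂ, ψ (-a) * ∑ ξ, f ξ * traceLift E ψ ξ‖ := by
        rw [← card_mul_sum_filter_trace_eq, norm_mul, Complex.norm_natCast]
    _ ≤ ∑ _ψ : AddChar F ℂ, B := norm_sum_le_of_le _ fun ψ _ => by
        rw [norm_mul, AddChar.norm_apply, one_mul]
        exact hB ψ
    _ = Fintype.card F * B := by
        rw [Finset.sum_const, Finset.card_univ, AddChar.card_eq, nsmul_eq_mul]

lemma card_filter_trace_eq_mul_card [Fintype F] (a : F) :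
    Finset.card {ξ : E | Algebra.trace F E ξ = a} * Fintype.card F = Fintype.card E := by
  have hfibre : ∀ b ∈ (Finset.univ : Finset F), Finset.card {ξ : E | Algebra.trace F E ξ = b} =
      Finset.card {ξ : E | Algebra.trace F E ξ = a} := fun b _ =>
    AddMonoidHom.card_fiber_eq_of_mem_range (Algebra.trace F E).toAddMonoidHom
      (Algebra.trace_surjective F E b) (Algebra.trace_surjective F E a)
  rw [← Finset.card_univ (α := E), Finset.card_eq_sum_card_fiberwise (s := Finset.univ)
    (fun ξ _ => Finset.mem_coe.2 (Finset.mem_univ (Algebra.trace F E ξ))),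
    Finset.sum_const_nat hfibre, Finset.card_univ, mul_comm]

end Fibre

section Admissible

variable {F E : Type*} [Field F] [Field E]

lemma add_inv_eq_inv_mul_sq_add_one {ξ : E} (hξ : ξ ≠ 0) : ξ + ξ⁻¹ = ξ⁻¹ * (ξ ^ 2 + 1) := by
  field_simp

variable [Fintype E] [Algebra F E]

lemma card_filter_mul_sq_add_one_eq_zero_le [DecidableEq E] {M : ℕ}
    (hM : M = 3 ∨ M = 2 ∧ (2 : E) = 0) :
    Finset.card {ξ : E | ξ * (ξ ^ 2 + 1) = 0} ≤ M := by
  rcases hM with rfl | ⟨rfl, h2⟩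
  · have hdeg : (X * (X ^ 2 + 1) : E[X]).natDegree = 3 := by compute_degree!
    rw [← hdeg]
    refine card_le_degree_of_subset_roots fun ξ hξ => ?_
    rw [mem_roots (ne_zero_of_natDegree_gt (n := 0) (by omega))]
    simpa using hξ
  · refine (Finset.card_le_card fun ξ hξ => ?_).trans (Finset.card_le_two (a := (0 : E)) (b := 1))
    have hfactor : ξ * (ξ - 1) ^ 2 = 0 := by
      linear_combination (Finset.mem_filter.1 hξ).2 - ξ ^ 2 * h2
    simpa [sub_eq_zero] using hfactor

open Classical in
/-- The elements of trace `a` for which `ξ` and `ξ + ξ⁻¹ = ξ⁻¹ (ξ ^ 2 + 1)` are both units. -/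
noncomputable def admissible (E : Type*) [Field E] [Fintype E] [Algebra F E] (a : F) : Finset E :=
  {ξ | Algebra.trace F E ξ = a ∧ ξ * (ξ ^ 2 + 1) ≠ 0}

lemma mem_admissible {a : F} {ξ : E} :
    ξ ∈ admissible E a ↔ Algebra.trace F E ξ = a ∧ ξ * (ξ ^ 2 + 1) ≠ 0 := by
  simp [admissible]

lemma ne_zero_of_mem_admissible {a : F} {ξ : E} (hξ : ξ ∈ admissible E a) : ξ ≠ 0 :=
  left_ne_zero_of_mul (mem_admissible.1 hξ).2

lemma add_inv_ne_zero_of_mem_admissible {a : F} {ξ : E} (hξ : ξ ∈ admissible E a) :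
    ξ + ξ⁻¹ ≠ 0 := by
  have h0 := ne_zero_of_mem_admissible hξ
  rw [add_inv_eq_inv_mul_sq_add_one h0]
  exact mul_ne_zero (inv_ne_zero h0) (right_ne_zero_of_mul (mem_admissible.1 hξ).2)

lemma card_div_card_sub_le_card_admissible [Fintype F] {M : ℕ}
    (hM : M = 3 ∨ M = 2 ∧ (2 : E) = 0) (a : F) :
    (Fintype.card E : ℝ) / Fintype.card F - M ≤ (admissible E a).card := by
  classical
  have hpos : (0 : ℝ) < Fintype.card F := by exact_mod_cast Fintype.card_pos
  have hsub : ({ξ : E | Algebra.trace F E ξ = a} : Finset E) ⊆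
      admissible E a ∪ ({ξ : E | ξ * (ξ ^ 2 + 1) = 0} : Finset E) := fun ξ hξ => by
    simp only [Finset.mem_filter, Finset.mem_univ, true_and] at hξ
    simp only [Finset.mem_union, mem_admissible, Finset.mem_filter, Finset.mem_univ, true_and]
    tauto
  have hle : Finset.card {ξ : E | Algebra.trace F E ξ = a} ≤ (admissible E a).card + M :=
    (Finset.card_le_card hsub).trans <| (Finset.card_union_le _ _).trans <|
      Nat.add_le_add_left (card_filter_mul_sq_add_one_eq_zero_le hM) _
  rw [← card_filter_trace_eq_mul_card a, Nat.cast_mul, mul_div_cancel_right₀ _ hpos.ne',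
    sub_le_iff_le_add]
  exact_mod_cast hle

lemma norm_sum_admissible_le [Finite F] {χ₁ χ₂ : MulChar E ℂ} (hne : (χ₁, χ₂) ≠ 1) {M : ℕ}
    (hM : M = 3 ∨ M = 2 ∧ (2 : E) = 0) (a : F) :
    ‖∑ ξ ∈ admissible E a, χ₁ ξ * χ₂ (ξ + ξ⁻¹)‖ ≤ M * √(Fintype.card E : ℝ) := by
  classical
  have hsum : ∑ ξ ∈ admissible E a, χ₁ ξ * χ₂ (ξ + ξ⁻¹) =
      ∑ ξ with Algebra.trace F E ξ = a, (χ₁ * χ₂⁻¹) ξ * χ₂ (ξ ^ 2 + 1) := by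
    rw [admissible, ← Finset.filter_filter, Finset.sum_filter]
    refine Finset.sum_congr rfl fun ξ _ => ?_
    split_ifs with hξ
    · rw [add_inv_eq_inv_mul_sq_add_one (left_ne_zero_of_mul hξ), map_mul, MulChar.mul_apply,
        MulChar.inv_apply', mul_assoc]
    · rcases mul_eq_zero.1 (not_not.1 hξ) with h | h <;>
        simp only [h, MulChar.map_zero, zero_mul, mul_zero]
  rw [hsum]
  refine norm_sum_filter_trace_eq_le (fun ψ => norm_mixedSum_le (fun h => hne ?_) hM) a
  obtain ⟨h₁, h₂, -⟩ := h
  rw [h₂, inv_one, mul_one] at h₁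
  rw [h₁, h₂, Prod.mk_one_one]

/-- Evaluation of a pair of multiplicative characters at `ξ` and `ξ + ξ⁻¹`. -/
noncomputable def admissibleEval {a : F} (ξ : admissible E a) :
    MulChar E ℂ × MulChar E ℂ →* ℂ where
  toFun χ := χ.1 ξ * χ.2 (ξ + (ξ : E)⁻¹)
  map_one' := by
    rw [Prod.fst_one, Prod.snd_one, MulChar.one_apply (ne_zero_of_mem_admissible ξ.2).isUnit,
      MulChar.one_apply (add_inv_ne_zero_of_mem_admissible ξ.2).isUnit, one_mul]
  map_mul' χ χ' := by
    simp only [Prod.fst_mul, Prod.snd_mul, MulChar.mul_apply]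
    ring

lemma admissibleEval_apply {a : F} (ξ : admissible E a) (χ : MulChar E ℂ × MulChar E ℂ) :
    admissibleEval ξ χ = χ.1 ξ * χ.2 (ξ + (ξ : E)⁻¹) := rfl

lemma norm_sum_admissibleEval_le [Finite F] {χ : MulChar E ℂ × MulChar E ℂ} (hχ : χ ≠ 1) {M : ℕ}
    (hM : M = 3 ∨ M = 2 ∧ (2 : E) = 0) (a : F) :
    ‖∑ ξ : admissible E a, admissibleEval ξ χ‖ ≤ M * √(Fintype.card E : ℝ) := by
  simp only [admissibleEval_apply]
  rw [Finset.sum_coe_sort (admissible E a) fun ξ => χ.1 ξ * χ.2 (ξ + ξ⁻¹)]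
  exact norm_sum_admissible_le hχ hM a

end Admissible

section Primitive

variable {E : Type*} [Field E] [Fintype E]

lemma orderOf_eq_card_sub_one_of_mulChar_ne_one {χ : ℕ → MulChar E ℂ}
    (hχ : ∀ l, l.Prime → l ∣ Fintype.card E - 1 → orderOf (χ l) = l) {y : E} (hy : y ≠ 0)
    (hne : ∀ l, l.Prime → l ∣ Fintype.card E - 1 → χ l y ≠ 1) :
    orderOf y = Fintype.card E - 1 := by
  refine orderOf_eq_of_pow_and_pow_div_prime (Nat.sub_pos_of_lt Fintype.one_lt_card)
    (FiniteField.pow_card_sub_one_eq_one y hy) fun l hl hdvd hpow => hne l hl hdvd ?_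
  obtain ⟨z, rfl⟩ := exists_pow_eq_of_pow_eq_one_of_card_sub_one
    (Nat.div_mul_cancel hdvd).symm hy hpow
  have hz : IsUnit z := (ne_zero_pow hl.ne_zero hy).isUnit
  rw [map_pow, ← MulChar.pow_apply' _ hl.ne_zero, orderOf_dvd_iff_pow_eq_one.1 (hχ l hl hdvd).dvd,
    MulChar.one_apply hz]

variable (E) in
lemma exists_mulChar_forall_prime_orderOf :
    ∃ χ : ℕ → MulChar E ℂ, ∀ l, l.Prime → l ∣ Fintype.card E - 1 → orderOf (χ l) = l := by
  have hex : ∀ l, ∃ χ : MulChar E ℂ, l.Prime → l ∣ Fintype.card E - 1 → orderOf χ = l := fun l => by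
    by_cases h : l.Prime ∧ l ∣ Fintype.card E - 1
    · obtain ⟨χ, hχ⟩ := MulChar.exists_mulChar_orderOf E h.2
        (Complex.isPrimitiveRoot_exp l h.1.ne_zero)
      exact ⟨χ, fun _ _ => hχ⟩
    · exact ⟨1, fun hl hdvd => absurd ⟨hl, hdvd⟩ h⟩
  exact Classical.axiom_of_choice hex

end Primitive

section Independence

lemma supIndep_zpowers_of_dual {H G ι : Type*} [CommGroup H] [Group G] {T : Finset ι} {h : ι → H}
    (π : ι → H →* G) (hπ : ∀ i ∈ T, ∀ j ∈ T, j ≠ i → π i (h j) = 1)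
    (hord : ∀ i ∈ T, orderOf (π i (h i)) = orderOf (h i)) :
    T.SupIndep fun i => Subgroup.zpowers (h i) := by
  intro S hS i hi hiS
  rw [Subgroup.disjoint_def]
  rintro x hx hxS
  obtain ⟨m, rfl⟩ := Subgroup.mem_zpowers_iff.1 hx
  have hker : (S.sup fun j => Subgroup.zpowers (h j)) ≤ (π i).ker := Finset.sup_le fun j hj => by
    rw [Subgroup.zpowers_le]
    exact hπ i hi j (hS hj) (ne_of_mem_of_not_mem hj hiS)
  have hpow : π i (h i) ^ m = 1 := by
    rw [← map_zpow]
    exact hker hxS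
  rwa [← orderOf_dvd_iff_zpow_eq_one, hord i hi, orderOf_dvd_iff_zpow_eq_one] at hpow

/-- The characters `(χ l, 1)` and `(1, χ l)`, indexed by two copies of the primes. -/
def pairFamily {G : Type*} [One G] (χ : ℕ → G) : ℕ ⊕ ℕ → G × G :=
  Sum.elim (fun l => (χ l, 1)) fun l => (1, χ l)

lemma orderOf_pairFamily {G : Type*} [Monoid G] (χ : ℕ → G) (i : ℕ ⊕ ℕ) :
    orderOf (pairFamily χ i) = orderOf (χ (i.elim id id)) := by
  rcases i with l | l <;> simp [pairFamily, Prod.orderOf]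

lemma supIndep_zpowers_pairFamily {G : Type*} [CommGroup G] {χ : ℕ → G} {S : Finset ℕ}
    (hprime : ∀ l ∈ S, l.Prime) (hord : ∀ l ∈ S, orderOf (χ l) = l) :
    (S.disjSum S).SupIndep fun i => Subgroup.zpowers (pairFamily χ i) := by
  let m : ℕ → ℕ := fun l => ∏ p ∈ S.erase l, p
  have hkill : ∀ l, ∀ j ∈ S, j ≠ l → χ j ^ m l = 1 := fun l j hj hjl => by
    refine orderOf_dvd_iff_pow_eq_one.1 ?_
    rw [hord j hj]
    exact Finset.dvd_prod_of_mem _ (Finset.mem_erase.2 ⟨hjl, hj⟩)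
  have hkeep : ∀ l ∈ S, orderOf (χ l ^ m l) = orderOf (χ l) := fun l hl => by
    refine Nat.Coprime.orderOf_pow ?_
    rw [hord l hl]
    exact Nat.Coprime.prod_right fun p hp => (Nat.coprime_primes (hprime l hl)
      (hprime p (Finset.mem_of_mem_erase hp))).2 (Finset.ne_of_mem_erase hp).symm
  refine supIndep_zpowers_of_dual (Sum.elim
    (fun l => (powMonoidHom (m l)).comp (MonoidHom.fst G G))
    fun l => (powMonoidHom (m l)).comp (MonoidHom.snd G G)) ?_ fun i hi => ?_
  · rintro (l | l) - (j | j) hj hjl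
    · exact hkill l j (Finset.inl_mem_disjSum.1 hj) fun h => hjl (congrArg Sum.inl h)
    · exact one_pow _
    · exact one_pow _
    · exact hkill l j (Finset.inr_mem_disjSum.1 hj) fun h => hjl (congrArg Sum.inr h)
  · rw [orderOf_pairFamily]
    rcases i with l | l
    · exact hkeep l (Finset.inl_mem_disjSum.1 hi)
    · exact hkeep l (Finset.inr_mem_disjSum.1 hi)

end Independence

section Criterion

lemma sqrt_pow_mul_rpow {x : ℝ} (hx : 0 < x) (n : ℕ) :
    √(x ^ n) * x ^ ((n : ℝ) / 2 - 1) = x ^ n / x := by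
  rw [← Real.rpow_natCast, Real.sqrt_eq_rpow, ← Real.rpow_mul hx.le, ← Real.rpow_add hx,
    ← Real.rpow_sub_one hx.ne']
  congr 1
  ring

lemma two_eq_zero_of_even_card {E : Type*} [Field E] [Fintype E]
    (h : Even (Fintype.card E)) : (2 : E) = 0 := by
  have hchar := FiniteField.even_card_iff_char_two.2 (Nat.even_iff.1 h)
  exact_mod_cast hchar ▸ ringChar.Nat.cast_ringChar (R := E)

variable {F E : Type*} [Field F] [Fintype F] [Field E] [Fintype E] [Algebra F E]

lemma exists_mem_admissible_forall_mulChar_ne_one {S₁ S₂ : Finset ℕ} (hdisj : Disjoint S₁ S₂)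
    {χ : ℕ → MulChar E ℂ} (hprime : ∀ l ∈ S₁ ∪ S₂, l.Prime)
    (hord : ∀ l ∈ S₁ ∪ S₂, orderOf (χ l) = l) {M : ℕ} (hM : M = 3 ∨ M = 2 ∧ (2 : E) = 0) {δ : ℝ}
    (hδdef : δ = 1 - 2 * ∑ p ∈ S₂, (1 : ℝ) / p) (hδ : 0 < δ)
    (hlt : M * √(Fintype.card E : ℝ) * (2 ^ (2 * S₁.card) * (2 + (2 * S₂.card - 1) / δ)) <
      (Fintype.card E : ℝ) / Fintype.card F) (a : F) :
    ∃ ξ ∈ admissible E a, ∀ l ∈ S₁ ∪ S₂, χ l ξ ≠ 1 ∧ χ l (ξ + ξ⁻¹) ≠ 1 := by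
  have hunion : S₁.disjSum S₁ ∪ S₂.disjSum S₂ = (S₁ ∪ S₂).disjSum (S₁ ∪ S₂) := by
    ext (l | l) <;> simp
  have hdisjSum : Disjoint (S₁.disjSum S₁) (S₂.disjSum S₂) := by
    rw [Finset.disjoint_left] at hdisj ⊢
    rintro (l | l) <;> simpa using @hdisj l
  have hord_gt : ∀ i ∈ (S₁ ∪ S₂).disjSum (S₁ ∪ S₂), 1 < orderOf (pairFamily χ i) := by
    rintro (l | l) hl <;> simp only [Finset.inl_mem_disjSum, Finset.inr_mem_disjSum] at hl <;>
      simp only [orderOf_pairFamily, Sum.elim_inl, Sum.elim_inr, id, hord l hl,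
        (hprime l hl).one_lt]
  have hδsum : δ = 1 - ∑ i ∈ S₂.disjSum S₂, 1 / (orderOf (pairFamily χ i) : ℝ) := by
    have hsum : ∑ l ∈ S₂, 1 / (orderOf (χ l) : ℝ) = ∑ l ∈ S₂, 1 / (l : ℝ) :=
      Finset.sum_congr rfl fun l hl => by rw [hord l (Finset.mem_union_right _ hl)]
    simp only [Finset.sum_disjSum, orderOf_pairFamily, Sum.elim_inl, Sum.elim_inr, id]
    rw [hsum, hδdef, two_mul]
  have hcard : M * √(Fintype.card E : ℝ) *
      (2 ^ (S₁.disjSum S₁).card * (2 + ((S₂.disjSum S₂).card - 1) / δ) - 1) <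
      (Finset.univ : Finset (admissible E a)).card := by
    have hM_le : (M : ℝ) ≤ M * √(Fintype.card E : ℝ) := le_mul_of_one_le_right (Nat.cast_nonneg M)
      (Real.one_le_sqrt.2 (by exact_mod_cast Fintype.card_pos))
    rw [Finset.card_univ, Fintype.card_coe, Finset.card_disjSum, Finset.card_disjSum, Nat.cast_add,
      ← two_mul, ← two_mul, mul_sub, mul_one]
    linarith [card_div_card_sub_le_card_admissible hM a]
  obtain ⟨ξ, -, hfree⟩ := exists_forall_map_ne_one
    (fun χ hχ => norm_sum_admissibleEval_le hχ hM a) hdisjSum (hunion ▸ hord_gt)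
    (hunion ▸ supIndep_zpowers_pairFamily hprime hord) hδsum hδ hcard
  have hone := MulChar.one_apply (R' := ℂ) (ne_zero_of_mem_admissible ξ.2).isUnit
  have hone' := MulChar.one_apply (R' := ℂ) (add_inv_ne_zero_of_mem_admissible ξ.2).isUnit
  rw [hunion] at hfree
  refine ⟨ξ, ξ.2, fun l hl => ⟨?_, ?_⟩⟩
  · simpa [admissibleEval_apply, pairFamily, hone'] using
      hfree (Sum.inl l) (Finset.inl_mem_disjSum.2 hl)
  · simpa [admissibleEval_apply, pairFamily, hone] using
      hfree (Sum.inr l) (Finset.inr_mem_disjSum.2 hl)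

theorem exists_primitive_pair_trace_eq {S₁ S₂ : Finset ℕ} (hdisj : Disjoint S₁ S₂)
    (hS : ∀ l, l ∈ S₁ ∪ S₂ ↔ l.Prime ∧ l ∣ Fintype.card E - 1) {M : ℕ}
    (hM : M = 3 ∨ M = 2 ∧ (2 : E) = 0) {δ : ℝ} (hδdef : δ = 1 - 2 * ∑ p ∈ S₂, (1 : ℝ) / p)
    (hδ : 0 < δ) (hlt : M * √(Fintype.card E : ℝ) *
      (2 ^ (2 * S₁.card) * (2 + (2 * S₂.card - 1) / δ)) < (Fintype.card E : ℝ) / Fintype.card F)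
    (a : F) :
    ∃ ξ : E, orderOf ξ = Fintype.card E - 1 ∧ orderOf (ξ + ξ⁻¹) = Fintype.card E - 1 ∧
      Algebra.trace F E ξ = a := by
  obtain ⟨χ, hχ⟩ := exists_mulChar_forall_prime_orderOf E
  obtain ⟨ξ, hξ, hfree⟩ := exists_mem_admissible_forall_mulChar_ne_one hdisj
    (fun l hl => ((hS l).1 hl).1) (fun l hl => hχ l ((hS l).1 hl).1 ((hS l).1 hl).2) hM hδdef hδ
    hlt a
  exact ⟨ξ,
    orderOf_eq_card_sub_one_of_mulChar_ne_one hχ (ne_zero_of_mem_admissible hξ)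
      fun l hl hdvd => (hfree l ((hS l).2 ⟨hl, hdvd⟩)).1,
    orderOf_eq_card_sub_one_of_mulChar_ne_one hχ (add_inv_ne_zero_of_mem_admissible hξ)
      fun l hl hdvd => (hfree l ((hS l).2 ⟨hl, hdvd⟩)).2,
    (mem_admissible.1 hξ).1⟩

end Criterion

end CohenGupta

theorem stmt16_general (q n k P : ℕ) (hfact : q ^ n - 1 = k * P) (hcop : Nat.gcd k P = 1)
    (δ : ℝ) (hδdef : δ = 1 - 2 * ∑ p ∈ P.primeFactors, (1 : ℝ) / p) (hδ : 0 < δ)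
    (hcond : (q : ℝ) ^ ((n : ℝ) / 2 - 1) >
      (if Even q then (2 : ℝ) else 3) * 2 ^ (2 * k.primeFactors.card) *
        (2 + (2 * (P.primeFactors.card : ℝ) - 1) / δ))
    (F E : Type*) [Field F] [Fintype F] [Field E] [Fintype E] [Algebra F E]
    (hF : Fintype.card F = q) (hE : Fintype.card E = q ^ n) (a : F) :
    ∃ ξ : E, orderOf ξ = q ^ n - 1 ∧ orderOf (ξ + ξ⁻¹) = q ^ n - 1 ∧
      Algebra.trace F E ξ = a := by
  have hkP : k * P ≠ 0 := by
    rw [← hfact, ← hE]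
    exact (Nat.sub_pos_of_lt Fintype.one_lt_card).ne'
  have hq : (0 : ℝ) < q := by exact_mod_cast hF ▸ Fintype.card_pos
  have hn : n ≠ 0 := by
    rintro rfl
    exact Fintype.one_lt_card.ne' (hE.trans (pow_zero q))
  obtain ⟨M, hM, hMq⟩ : ∃ M : ℕ, (M = 3 ∨ M = 2 ∧ (2 : E) = 0) ∧
      (if Even q then (2 : ℝ) else 3) = M := by
    split_ifs with heven
    · exact ⟨2, .inr ⟨rfl, CohenGupta.two_eq_zero_of_even_card (hE ▸ heven.pow_of_ne_zero hn)⟩, rfl⟩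
    · exact ⟨3, .inl rfl, rfl⟩
  rw [← hE]
  refine CohenGupta.exists_primitive_pair_trace_eq (Nat.Coprime.disjoint_primeFactors hcop)
    (fun l => ?_) hM hδdef hδ ?_ a
  · rw [← Nat.primeFactors_mul (left_ne_zero_of_mul hkP) (right_ne_zero_of_mul hkP),
      Nat.mem_primeFactors_of_ne_zero hkP, hE, hfact]
  · rw [hE, hF, Nat.cast_pow, ← CohenGupta.sqrt_pow_mul_rpow hq, mul_comm (M : ℝ), mul_assoc,
      ← mul_assoc (M : ℝ), ← hMq]
    exact mul_lt_mul_of_pos_left hcond (Real.sqrt_pos.2 (pow_pos hq n))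

/-- Cohen–Gupta criterion (Theorem 7.1): write `q^3 - 1 = k·P` with `gcd(k,P) = 1`
and `ω(P) = s ≥ 1`, the radical of `P` being the product of the distinct primes
`p_1, …, p_s`. Put `δ = 1 - 2∑ 1/pᵢ` and `C_q = 2` for even `q`, `C_q = 3` for
odd `q`. If `δ > 0` and `q^(1/2) > C_q · 2^(2ω(k)) · (2 + (2s-1)/δ)`, then for
every `a ∈ F_q` there is a primitive `ξ ∈ F_{q^3}` with `ξ + ξ⁻¹` primitive and
`Tr ξ = a`. -/
theorem stmt16 (q : ℕ) (hq : IsPrimePow q) (k P : ℕ)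
    (hfact : q ^ 3 - 1 = k * P) (hcop : Nat.gcd k P = 1)
    (hs : 1 ≤ P.primeFactors.card)
    (δ : ℝ) (hδdef : δ = 1 - 2 * ∑ p ∈ P.primeFactors, (1 : ℝ) / p) (hδ : 0 < δ)
    (hcond : (q : ℝ) ^ ((1 : ℝ) / 2) >
      (if Even q then (2 : ℝ) else 3) * 2 ^ (2 * k.primeFactors.card) *
        (2 + (2 * (P.primeFactors.card : ℝ) - 1) / δ))
    (F E : Type*) [Field F] [Fintype F] [Field E] [Fintype E] [Algebra F E]
    (hF : Fintype.card F = q) (hE : Fintype.card E = q ^ 3) (a : F) :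
    ∃ ξ : E, orderOf ξ = q ^ 3 - 1 ∧ orderOf (ξ + ξ⁻¹) = q ^ 3 - 1 ∧
      Algebra.trace F E ξ = a :=
  stmt16_general q 3 k P hfact hcop δ hδdef hδ (by convert hcond using 2; norm_num) F E hF hE a
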